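/- The quadruple integral ∫₀^∞∫₀^∞∫₀^∞∫₀^∞ [x₁x₂x₃x₄·((1 + x₁+x₂+x₃+x₄)(1 + 1/x₁+1/x₂+1/x₃+1/x₄) − 1)]^{-1} dx₁ dx₂ dx₃ dx₄ equals (4/3)·∫₀^π∫₀^π∫₀^π∫₀^π (4 − cos φ₁ − cos φ₂ − cos φ₃ − cos φ₄)^{-1} dφ₁ dφ₂ dφ₃ dφ₄. -/

import Mathlib

open Real MeasureTheory Set

/-- Modified Bessel function `I₀(t) = (1/π)∫₀^π exp(t cos θ) dθ`. -/
noncomputable def I0 (t : ℝ) : ℝ := (1 / π) * ∫ θ in (0:ℝ)..π, exp (t * cos θ)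

/-- Modified Bessel function `K₀(t) = ∫₀^∞ exp(−t cosh u) du`. -/
noncomputable def K0 (t : ℝ) : ℝ := ∫ u in Ioi (0:ℝ), exp (-(t * Real.cosh u))

/-- Rising factorial `(a)ₙ = a(a+1)⋯(a+n−1)`. -/
noncomputable def ris (a : ℝ) (n : ℕ) : ℝ := ∏ k ∈ Finset.range n, (a + k)

/-- Generalized hypergeometric series `ₚF_q(a; b | x)`. -/
noncomputable def pFq (a b : List ℝ) (x : ℝ) : ℝ :=
  ∑' n : ℕ, ((a.map fun p => ris p n).prod / (b.map fun q => ris q n).prod) * x ^ n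
    / (n.factorial : ℝ)

namespace SW

/-- reciprocal square root, zero off the positive axis -/
noncomputable def rh (t : ℝ) : ENNReal := ENNReal.ofReal (√t)⁻¹

/-- truncated reciprocal -/
noncomputable def iv (t : ℝ) : ENNReal := ENNReal.ofReal t⁻¹

@[fun_prop] lemma measurable_rh : Measurable rh := by unfold rh; fun_prop
@[fun_prop] lemma measurable_iv : Measurable iv := by unfold iv; fun_prop

lemma rh_of_nonpos {t : ℝ} (h : t ≤ 0) : rh t = 0 := by
  simp [rh, Real.sqrt_eq_zero_of_nonpos h]

lemma rh_mul {a : ℝ} (b : ℝ) (ha : 0 ≤ a) : rh (a * b) = rh a * rh b := by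
  unfold rh
  rw [Real.sqrt_mul ha, mul_inv, ENNReal.ofReal_mul (by positivity)]

lemma rh_mul' (a : ℝ) {b : ℝ} (hb : 0 ≤ b) : rh (a * b) = rh a * rh b := by
  rw [mul_comm, rh_mul _ hb, mul_comm]

lemma rh_mul_add {a b : ℝ} (h : 0 ≤ a + b) : rh (a * b) = rh a * rh b := by
  by_cases ha : 0 ≤ a
  · exact rh_mul b ha
  · exact rh_mul' a (by linarith)

lemma rh_sq {a : ℝ} (ha : 0 ≤ a) : rh (a ^ 2) = iv a := by
  unfold rh iv; rw [Real.sqrt_sq ha]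

lemma rh_sqrt {a : ℝ} : rh a = iv (√a) := rfl

lemma iv_mul {a : ℝ} (b : ℝ) (ha : 0 ≤ a) : iv (a * b) = iv a * iv b := by
  unfold iv; rw [mul_inv, ENNReal.ofReal_mul (by positivity)]

lemma rh_ne_zero {t : ℝ} (h : rh t ≠ 0) : 0 < t := by
  by_contra h'; exact h (rh_of_nonpos (not_lt.mp h'))

lemma rh_mul_self {t : ℝ} (h : 0 ≤ t) : rh t * rh t = iv t := by
  rw [← rh_mul _ h, ← sq, rh_sq h]

lemma ofReal_mul_iv {a b : ℝ} (ha : 0 ≤ a) : ENNReal.ofReal a * iv b = ENNReal.ofReal (a / b) := by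
  unfold iv; rw [← ENNReal.ofReal_mul ha, div_eq_mul_inv]

/-- 1-D change of variables -/
lemma cov {s t : Set ℝ} (hs : MeasurableSet s) {g g' : ℝ → ℝ}
    (hg : ∀ x ∈ s, HasDerivAt g (g' x) x) (inj : InjOn g s) (im : g '' s = t)
    (f : ℝ → ENNReal) :
    ∫⁻ y in t, f y = ∫⁻ x in s, ENNReal.ofReal |g' x| * f (g x) := by
  rw [← im]
  exact lintegral_image_eq_lintegral_abs_deriv_mul hs (fun x hx => (hg x hx).hasDerivWithinAt) inj f

lemma cov_inv {s t : Set ℝ} (hs : MeasurableSet s) {g g' k : ℝ → ℝ}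
    (hg : ∀ x ∈ s, HasDerivAt g (g' x) x) (m1 : ∀ x ∈ s, g x ∈ t) (m2 : ∀ y ∈ t, k y ∈ s)
    (kg : ∀ x ∈ s, k (g x) = x) (gk : ∀ y ∈ t, g (k y) = y)
    (f : ℝ → ENNReal) :
    ∫⁻ y in t, f y = ∫⁻ x in s, ENNReal.ofReal |g' x| * f (g x) := by
  refine cov hs hg ?_ ?_ f
  · intro x hx y hy h
    have := congrArg k h
    rwa [kg x hx, kg y hy] at this
  · ext y; constructor
    · rintro ⟨x, hx, rfl⟩; exact m1 x hx
    · intro hy; exact ⟨k y, m2 y hy, gk y hy⟩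

lemma cov_half {g g' : ℝ → ℝ} (hg : ∀ x, 0 ≤ x → HasDerivAt g (g' x) x) (g0 : g 0 = 0)
    (hp : ∀ x, 0 < x → 0 < g' x) (c d : ℝ) (hc : 0 < c) (hb : ∀ x, 0 ≤ x → c * x - d ≤ g x)
    (f : ℝ → ENNReal) :
    ∫⁻ y in Ioi 0, f y = ∫⁻ x in Ioi 0, ENNReal.ofReal (g' x) * f (g x) := by
  have cont : ContinuousOn g (Ici 0) := fun x hx => (hg x hx).continuousAt.continuousWithinAt
  have mono : StrictMonoOn g (Ici 0) := by
    apply strictMonoOn_of_deriv_pos (convex_Ici 0) cont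
    intro x hx
    rw [interior_Ici] at hx
    rw [(hg x (le_of_lt hx)).deriv]; exact hp x hx
  rw [cov (s := Ioi 0) (t := Ioi 0) measurableSet_Ioi (fun x hx => hg x (le_of_lt hx))
    (mono.injOn.mono Ioi_subset_Ici_self) ?_ f]
  · apply setLIntegral_congr_fun measurableSet_Ioi
    intro x hx
    simp only [abs_of_pos (hp x hx)]
  · ext y; constructor
    · rintro ⟨x, hx, rfl⟩
      have := mono (mem_Ici.mpr le_rfl) (le_of_lt hx : (0:ℝ) ≤ x) hx
      rwa [g0] at this
    · intro hy
      have hy : 0 < y := hy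
      set b := (|d| + y) / c with hbdef
      have hb0 : 0 ≤ b := by positivity
      have h2 : y ≤ g b := by
        refine le_trans ?_ (hb b hb0)
        rw [hbdef, mul_div_cancel₀ _ hc.ne']
        linarith [le_abs_self d]
      have := intermediate_value_Icc hb0 (cont.mono Icc_subset_Ici_self)
      obtain ⟨x, hx, hxy⟩ := this ⟨by rw [g0]; exact hy.le, h2⟩
      refine ⟨x, ?_, hxy⟩
      rcases hx.1.eq_or_lt with h | h
      · rw [← h, g0] at hxy; exact absurd hxy hy.ne
      · exact h

lemma aff (k d : ℝ) (hk : k ≠ 0) (f : ℝ → ENNReal) :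
    ∫⁻ y, f y = ENNReal.ofReal |k| * ∫⁻ x, f (k * x + d) := by
  have := cov_inv (s := univ) (t := univ) (g := fun x => k * x + d) (g' := fun _ => k)
    (k := fun y => (y - d) / k) MeasurableSet.univ
    (fun x _ => by simpa using ((hasDerivAt_id x).const_mul k).add_const d)
    (by simp) (by simp) (fun x _ => by field_simp; ring) (fun x _ => by field_simp; ring) f
  simp only [Measure.restrict_univ] at this
  rw [this, lintegral_const_mul' _ _ ENNReal.ofReal_ne_top]

lemma scale {k : ℝ} (hk : 0 < k) (f : ℝ → ENNReal) :
    ∫⁻ y in Ioi 0, f y = ENNReal.ofReal k * ∫⁻ x in Ioi 0, f (k * x) := by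
  have := cov_inv (s := Ioi 0) (t := Ioi 0) (g := fun x => k * x) (g' := fun _ => k)
    (k := fun y => y / k) measurableSet_Ioi
    (fun x _ => by simpa using ((hasDerivAt_id x).const_mul k))
    (fun x hx => mul_pos hk hx) (fun x hx => div_pos hx hk) (fun x _ => by field_simp)
    (fun x _ => by field_simp) f
  rw [this, lintegral_const_mul' _ _ ENNReal.ofReal_ne_top, abs_of_pos hk]

lemma sqcov (f : ℝ → ENNReal) :
    ∫⁻ y in Ioi 0, f y = ∫⁻ x in Ioi 0, ENNReal.ofReal (2 * x) * f (x ^ 2) := by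
  refine cov_half (g := fun x => x ^ 2) (fun x _ => by simpa using hasDerivAt_pow 2 x) (by simp)
    (fun x hx => by positivity) 2 1 (by norm_num) (fun x _ => by nlinarith [sq_nonneg (x - 1)]) f

/-- complete elliptic cycle -/
noncomputable def KK (m n : ℝ) : ENNReal := ∫⁻ u in Ioi 0, rh (u * (u + m) * (u + n))

lemma KK_comm (m n : ℝ) : KK m n = KK n m := by
  unfold KK; congr 1; ext u; congr 1; ring

lemma K1 {a b c d : ℝ} (hb : 0 < b) (hd : 0 < d) :
    ∫⁻ t in Ioi 0, rh (t * (a + b * t) * (c + d * t)) = KK (a * d) (b * c) := by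
  rw [scale (k := (b * d)⁻¹) (by positivity), ← lintegral_const_mul' _ _ ENNReal.ofReal_ne_top]
  unfold KK
  apply setLIntegral_congr_fun measurableSet_Ioi
  intro u hu
  have e : (b * d)⁻¹ * u * (a + b * ((b * d)⁻¹ * u)) * (c + d * ((b * d)⁻¹ * u))
    = ((b * d)⁻¹) ^ 2 * (u * (u + a * d) * (u + b * c)) := by field_simp; ring
  simp only [e]
  rw [rh_mul _ (by positivity), rh_sq (by positivity), ← mul_assoc, ofReal_mul_iv (by positivity),
    div_self (by positivity)]
  simp

/-- Moebius substitution on a segment -/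
lemma mob {p q : ℝ} (h : p < q) (f : ℝ → ENNReal) :
    ∫⁻ x in Ioo p q, f x
      = ∫⁻ t in Ioi 0, ENNReal.ofReal ((q - p) / (1 + t) ^ 2) * f ((p + q * t) / (1 + t)) := by
  have h' : 0 < q - p := by linarith
  rw [cov_inv (s := Ioi 0) (t := Ioo p q) (g := fun t => (p + q * t) / (1 + t))
    (g' := fun t => (q - p) / (1 + t) ^ 2) (k := fun x => (x - p) / (q - x)) measurableSet_Ioi]
  · apply setLIntegral_congr_fun measurableSet_Ioi
    intro u hu
    have hu : 0 < u := hu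
    simp only []
    rw [abs_of_pos (by positivity)]
  · intro x hx
    have hx : 0 < x := hx
    have h1 : HasDerivAt (fun t : ℝ => p + q * t) q x := by
      simpa using ((hasDerivAt_id x).const_mul q).const_add p
    have h2 : HasDerivAt (fun t : ℝ => 1 + t) 1 x := by
      simpa using (hasDerivAt_id x).const_add 1
    exact (h1.fun_div h2 (by positivity)).congr_deriv (by ring)
  · intro x hx
    have hx : 0 < x := hx
    constructor
    · rw [lt_div_iff₀ (by positivity)]; nlinarith
    · rw [div_lt_iff₀ (by positivity)]; nlinarith
  · intro y hy
    have h1 := hy.1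
    have h2 := hy.2
    have h3 : 0 < y - p := by linarith
    have h4 : 0 < q - y := by linarith
    exact div_pos h3 h4
  · intro x hx
    have hx : 0 < x := hx
    have : q - (p + q * x) / (1 + x) = (q - p) / (1 + x) := by field_simp; ring
    rw [this]; field_simp; ring
  · intro y hy
    have h1 := hy.1
    have h2 : q - y ≠ 0 := by linarith [hy.2]
    have : 1 + (y - p) / (q - y) = (q - p) / (q - y) := by field_simp; ring
    rw [this]; field_simp; ring

lemma seg {p q : ℝ} (h : p < q) (a0 a1 b0 b1 : ℝ) (hLq : 0 < a0 + a1 * q)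
    (hMq : 0 < b0 + b1 * q) :
    ∫⁻ x in Ioo p q, rh ((x - p) * (q - x) * (a0 + a1 * x) * (b0 + b1 * x))
      = KK ((a0 + a1 * p) * (b0 + b1 * q)) ((a0 + a1 * q) * (b0 + b1 * p)) := by
  rw [mob h, ← K1 hLq hMq]
  apply setLIntegral_congr_fun measurableSet_Ioi
  intro t ht
  have ht : 0 < t := ht
  have h' : 0 < q - p := by linarith
  have e : ((p + q * t) / (1 + t) - p) * (q - (p + q * t) / (1 + t)) *
      (a0 + a1 * ((p + q * t) / (1 + t))) * (b0 + b1 * ((p + q * t) / (1 + t)))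
      = ((q - p) / (1 + t) ^ 2) ^ 2 *
        (t * (a0 + a1 * p + (a0 + a1 * q) * t) * (b0 + b1 * p + (b0 + b1 * q) * t)) := by
    field_simp; ring
  simp only [e]
  rw [rh_mul _ (by positivity), rh_sq (by positivity), ← mul_assoc, ofReal_mul_iv (by positivity),
    div_self (by positivity)]
  simp

lemma halfline (r a0 a1 b0 b1 : ℝ) (ha : 0 < a1) (hb : 0 < b1) :
    ∫⁻ x in Ioi r, rh ((x - r) * (a0 + a1 * x) * (b0 + b1 * x))
      = KK ((a0 + a1 * r) * b1) (a1 * (b0 + b1 * r)) := by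
  rw [cov_inv (s := Ioi 0) (t := Ioi r) (g := fun x => x + r) (g' := fun _ => 1)
    (k := fun y => y - r) measurableSet_Ioi (fun x _ => by simpa using (hasDerivAt_id x).add_const r)
    (fun x hx => by simpa using hx) (fun x hx => by simpa using hx) (by simp) (by simp),
    ← K1 ha hb]
  apply setLIntegral_congr_fun measurableSet_Ioi
  intro x _
  simp only [abs_one, ENNReal.ofReal_one, one_mul]
  congr 1; ring

lemma outer {p q r s : ℝ} (h1 : p < q) (h2 : q < r) (h3 : r < s) :
    ∫⁻ x in Iio p ∪ Ioi s, rh ((x - p) * (x - q) * (x - r) * (x - s))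
     = ∫⁻ x in Ioo q r, rh ((x - p) * (x - q) * (x - r) * (x - s)) := by
  have e2 : ∫⁻ x in Ioo q r, rh ((x - p) * (x - q) * (x - r) * (x - s))
      = KK ((s - q) * (r - p)) ((q - p) * (s - r)) := by
    rw [KK_comm]
    have := seg h2 (-p) 1 s (-1) (by linarith) (by linarith)
    rw [show (q - p) * (s - r) = (-p + 1 * q) * (s + -1 * r) by ring,
      show (s - q) * (r - p) = (-p + 1 * r) * (s + -1 * q) by ring, ← this]
    congr 1; ext x; congr 1; ring
  rw [e2, ← K1 (a := s - q) (b := q - p) (c := s - r) (d := r - p) (by linarith) (by linarith)]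
  have hsp : 0 < s - p := by linarith
  have e3 : ∫⁻ t in Ioi 0, rh (t * (s - q + (q - p) * t) * (s - r + (r - p) * t))
      = ∫⁻ t in Ioi 0 \ {1}, rh (t * (s - q + (q - p) * t) * (s - r + (r - p) * t)) := by
    apply setLIntegral_congr
    exact (sdiff_null_ae_eq_self (by simp)).symm
  rw [e3, cov_inv (s := Ioi 0 \ {1}) (t := Iio p ∪ Ioi s) (g := fun t => (s - p * t) / (1 - t))
    (g' := fun t => (s - p) / (1 - t) ^ 2) (k := fun x => (x - s) / (x - p))
    (measurableSet_Ioi.diff (measurableSet_singleton 1))]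
  · apply setLIntegral_congr_fun (measurableSet_Ioi.diff (measurableSet_singleton 1))
    rintro t ⟨ht, ht1⟩
    have ht : 0 < t := ht
    have h1t : 1 - t ≠ 0 := fun h => ht1 (by simp; linarith)
    have e : ((s - p * t) / (1 - t) - p) * ((s - p * t) / (1 - t) - q) *
       ((s - p * t) / (1 - t) - r) * ((s - p * t) / (1 - t) - s)
      = ((s - p) / (1 - t) ^ 2) ^ 2 *
        (t * (s - q + (q - p) * t) * (s - r + (r - p) * t)) := by
      field_simp; ring
    have hpos : 0 < (s - p) / (1 - t) ^ 2 := by positivity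
    simp only [e]
    rw [rh_mul _ (by positivity), rh_sq hpos.le, ← mul_assoc, abs_of_pos hpos,
      ofReal_mul_iv hpos.le, div_self hpos.ne']
    simp
  · rintro x ⟨hx, hx1⟩
    have h1t : 1 - x ≠ 0 := fun h => hx1 (by simp; linarith)
    have h1 : HasDerivAt (fun t : ℝ => s - p * t) (-p) x := by
      simpa using ((hasDerivAt_id x).const_mul p).const_sub s
    have h2 : HasDerivAt (fun t : ℝ => 1 - t) (-1) x := by
      simpa using (hasDerivAt_id x).const_sub 1
    exact (h1.fun_div h2 h1t).congr_deriv (by ring)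
  · rintro x ⟨hx, hx1⟩
    have hx : 0 < x := hx
    have h1t : x ≠ 1 := fun h => hx1 (by simp [h])
    rcases lt_or_gt_of_ne h1t with h | h
    · right
      rw [mem_Ioi, lt_div_iff₀ (by linarith)]; nlinarith
    · left
      rw [mem_Iio, div_lt_iff_of_neg (by linarith)]; nlinarith
  · rintro y hy
    have hne : y - p ≠ 0 := by
      rcases hy with h | h
      · have : y < p := h
        linarith
      · have : s < y := h
        linarith
    constructor
    · rcases hy with h | h
      · have : y < p := h
        have h4 : y - s < 0 := by linarith
        have h5 : y - p < 0 := by linarith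
        exact div_pos_of_neg_of_neg h4 h5
      · have : s < y := h
        have h4 : 0 < y - s := by linarith
        have h5 : 0 < y - p := by linarith
        exact div_pos h4 h5
    · simp only [mem_singleton_iff]
      rw [div_eq_one_iff_eq hne]; intro h; linarith
  · rintro x ⟨hx, hx1⟩
    have h1t : 1 - x ≠ 0 := fun h => hx1 (by simp; linarith)
    have : (s - p * x) / (1 - x) - p = (s - p) / (1 - x) := by field_simp; ring
    rw [this]; field_simp; ring
  · rintro y hy
    have hne : y - p ≠ 0 := by
      rcases hy with h | h
      · have : y < p := h
        linarith
      · have : s < y := h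
        linarith
    have : 1 - (y - s) / (y - p) = (s - p) / (y - p) := by field_simp; ring
    rw [this]; field_simp; ring

/-- base integral -/
lemma base {a b : ℝ} (ha : 0 < a) (hb : 0 < b) :
    ∫⁻ t in Ioi 0, rh t * iv (a + b * t) = ENNReal.ofReal π * rh (a * b) := by
  rw [sqcov, scale (k := √(a / b)) (by positivity)]
  have e : ∀ u ∈ Ioi (0:ℝ), ENNReal.ofReal (2 * (√(a / b) * u)) * (rh ((√(a / b) * u) ^ 2) *
      iv (a + b * (√(a / b) * u) ^ 2)) = ENNReal.ofReal (2 / a) * ENNReal.ofReal ((1 + u ^ 2)⁻¹) := by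
    intro u hu
    have hu : 0 < u := hu
    have hs : 0 < √(a / b) := by positivity
    rw [rh_sq (by positivity), ← mul_assoc, ofReal_mul_iv (by positivity), ofReal_mul_iv (by positivity),
      ← ENNReal.ofReal_mul (by positivity), mul_pow, Real.sq_sqrt (by positivity)]
    congr 1
    field_simp
  rw [setLIntegral_congr_fun measurableSet_Ioi e, lintegral_const_mul' _ _ ENNReal.ofReal_ne_top,
    ← ofReal_integral_eq_lintegral_ofReal, integral_Ioi_inv_one_add_sq]
  · unfold rh
    rw [← ENNReal.ofReal_mul (by positivity), ← ENNReal.ofReal_mul (by positivity),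
      ← ENNReal.ofReal_mul (by positivity)]
    congr 1
    rw [Real.sqrt_div ha.le, Real.sqrt_mul ha.le, arctan_zero]
    have h1 := Real.sq_sqrt ha.le
    have h2 : 0 < √a := by positivity
    have h3 : 0 < √b := by positivity
    field_simp
    linear_combination (π) * h1
  · exact integrable_inv_one_add_sq.integrableOn
  · exact Filter.Eventually.of_forall fun x => by positivity

lemma arcsine {p q : ℝ} (h : p < q) (a0 a1 : ℝ) (hp : 0 < a0 + a1 * p) (hq : 0 < a0 + a1 * q) :
    ∫⁻ x in Ioo p q, rh ((x - p) * (q - x)) * iv (a0 + a1 * x)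
      = ENNReal.ofReal π * rh ((a0 + a1 * p) * (a0 + a1 * q)) := by
  rw [mob h, ← base hp hq]
  apply setLIntegral_congr_fun measurableSet_Ioi
  intro t ht
  have ht : 0 < t := ht
  have h' : 0 < q - p := by linarith
  have e : ((p + q * t) / (1 + t) - p) * (q - (p + q * t) / (1 + t))
      = ((q - p) / (1 + t)) ^ 2 * t := by
    field_simp; ring
  have e2 : a0 + a1 * ((p + q * t) / (1 + t))
     = (1 + t)⁻¹ * ((a0 + a1 * p) + (a0 + a1 * q) * t) := by field_simp; ring
  simp only [e, e2]
  rw [rh_mul _ (by positivity), rh_sq (by positivity), iv_mul _ (by positivity)]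
  have : ENNReal.ofReal ((q - p) / (1 + t) ^ 2) * iv ((q - p) / (1 + t)) * iv ((1 + t)⁻¹) = 1 := by
    rw [ofReal_mul_iv (by positivity), ofReal_mul_iv (by positivity)]
    rw [← ENNReal.ofReal_one]; congr 1; field_simp
  rw [← one_mul (rh t * _), ← this]; ring
end SW

namespace SW

/-- Kallen function -/
noncomputable def lam (x y v : ℝ) : ℝ := x^2 + y^2 + v^2 - 2*x*y - 2*y*v - 2*x*v

@[fun_prop] lemma measurable_lam {α : Type*} [MeasurableSpace α] {f g h : α → ℝ}
    (hf : Measurable f) (hg : Measurable g) (hh : Measurable h) :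
    Measurable (fun a => lam (f a) (g a) (h a)) := by unfold lam; fun_prop

/-- weight on the unit interval -/
noncomputable def wA (x : ℝ) : ENNReal := rh x * rh (1 - x)
/-- weight beyond one -/
noncomputable def wB (x : ℝ) : ENNReal := rh x * rh (x - 1)
/-- weight on the half line -/
noncomputable def wN (x : ℝ) : ENNReal := rh x * rh (1 + x)

@[fun_prop] lemma measurable_wA : Measurable wA := by unfold wA; fun_prop
@[fun_prop] lemma measurable_wB : Measurable wB := by unfold wB; fun_prop
@[fun_prop] lemma measurable_wN : Measurable wN := by unfold wN; fun_prop

lemma wA_zero {x : ℝ} (h : x ∉ Ioo (0:ℝ) 1) : wA x = 0 := by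
  unfold wA
  by_cases h0 : x ≤ 0
  · simp [rh_of_nonpos h0]
  · have : 1 - x ≤ 0 := by
      by_contra h1; exact h ⟨by linarith, by linarith⟩
    simp [rh_of_nonpos this]

lemma wB_zero {x : ℝ} (h : x ∉ Ioi (1:ℝ)) : wB x = 0 := by
  unfold wB
  have : x - 1 ≤ 0 := by simpa using h
  simp [rh_of_nonpos this]

lemma wN_zero {x : ℝ} (h : x ∉ Ioi (0:ℝ)) : wN x = 0 := by
  unfold wN
  have : x ≤ 0 := by simpa using h
  simp [rh_of_nonpos this]

lemma supp {s : Set ℝ} (hs : MeasurableSet s) {f : ℝ → ENNReal} (h : ∀ x, x ∉ s → f x = 0) :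
    ∫⁻ x, f x = ∫⁻ x in s, f x := by
  rw [← lintegral_indicator hs]
  congr 1; ext x
  by_cases hx : x ∈ s
  · simp [hx]
  · simp [hx, h x hx]

lemma supp2 {s t : Set ℝ} (hs : MeasurableSet s) (ht : MeasurableSet t) {f : ℝ → ENNReal}
    (hst : s ⊆ t) (h : ∀ x ∈ t, x ∉ s → f x = 0) :
    ∫⁻ x in t, f x = ∫⁻ x in s, f x := by
  rw [← lintegral_indicator hs, ← lintegral_indicator ht]
  congr 1; ext x
  by_cases hx : x ∈ s
  · simp [hx, hst hx]
  · by_cases hx' : x ∈ t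
    · simp [hx, hx', h x hx' hx]
    · simp [hx, hx']

lemma swap2 {μ ν : Measure ℝ} [SFinite μ] [SFinite ν] {f : ℝ → ℝ → ENNReal}
    (h : Measurable fun p : ℝ × ℝ => f p.1 p.2) :
    ∫⁻ x, ∫⁻ y, f x y ∂ν ∂μ = ∫⁻ y, ∫⁻ x, f x y ∂μ ∂ν :=
  lintegral_lintegral_swap h.aemeasurable

lemma meas_int {α : Type*} [MeasurableSpace α] {ν : Measure ℝ} [SFinite ν] {f : α → ℝ → ENNReal}
    (h : Measurable fun p : α × ℝ => f p.1 p.2) : Measurable fun x => ∫⁻ y, f x y ∂ν :=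
  h.lintegral_prod_right'

/-- xyz to xzy -/
lemma swap_in {μ ν τ : Measure ℝ} [SFinite μ] [SFinite ν] [SFinite τ] {f : ℝ → ℝ → ℝ → ENNReal}
    (h : Measurable fun p : ℝ × ℝ × ℝ => f p.1 p.2.1 p.2.2) :
    ∫⁻ x, ∫⁻ y, ∫⁻ z, f x y z ∂τ ∂ν ∂μ = ∫⁻ x, ∫⁻ z, ∫⁻ y, f x y z ∂ν ∂τ ∂μ := by
  congr 1; ext x
  refine swap2 ?_
  exact h.comp (by fun_prop : Measurable fun p : ℝ × ℝ => (x, p.1, p.2))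

/-- xyz to yxz -/
lemma swap_out {μ ν τ : Measure ℝ} [SFinite μ] [SFinite ν] [SFinite τ] {f : ℝ → ℝ → ℝ → ENNReal}
    (h : Measurable fun p : ℝ × ℝ × ℝ => f p.1 p.2.1 p.2.2) :
    ∫⁻ x, ∫⁻ y, ∫⁻ z, f x y z ∂τ ∂ν ∂μ = ∫⁻ y, ∫⁻ x, ∫⁻ z, f x y z ∂τ ∂μ ∂ν := by
  refine swap2 ?_
  refine meas_int (f := fun (p : ℝ × ℝ) z => f p.1 p.2 z) ?_
  exact h.comp (by fun_prop : Measurable fun p : (ℝ × ℝ) × ℝ => (p.1.1, p.1.2, p.2))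

lemma polar {G : ℝ → ℝ → ENNReal} (hG : Measurable fun p : ℝ × ℝ => G p.1 p.2) :
    ∫⁻ x, ∫⁻ y, rh x * rh y * G x y = ∫⁻ q in Ioi 0, rh q * ∫⁻ x in Ioi 0, G x (q * x) := by
  have e1 : ∀ x ∈ Ioi (0:ℝ), ∫⁻ y, rh x * rh y * G x y = ∫⁻ q in Ioi 0, rh q * G x (q * x) := by
    intro x hx
    have hx : 0 < x := hx
    rw [supp measurableSet_Ioi (s := Ioi 0), scale hx, ← lintegral_const_mul' _ _ ENNReal.ofReal_ne_top]
    · apply setLIntegral_congr_fun measurableSet_Ioi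
      intro q hq
      simp only [mul_comm x q]
      rw [rh_mul' q hx.le]
      have : ENNReal.ofReal x * (rh x * rh x) = 1 := by
        rw [rh_mul_self hx.le, ofReal_mul_iv hx.le, div_self hx.ne']; simp
      rw [show ENNReal.ofReal x * (rh x * (rh q * rh x) * G x (q * x)) =
        (ENNReal.ofReal x * (rh x * rh x)) * (rh q * G x (q * x)) by ring, this, one_mul]
    · intro y hy
      simp [rh_of_nonpos (show y ≤ 0 by simpa using hy)]
  rw [supp measurableSet_Ioi (s := Ioi 0) (by
    intro y hy
    simp [rh_of_nonpos (show y ≤ 0 by simpa using hy)]),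
    setLIntegral_congr_fun measurableSet_Ioi e1, swap2]
  · congr 1; ext q
    rw [lintegral_const_mul' _ _ (by simp [rh])]
  · have : Measurable fun p : ℝ × ℝ => G p.1 (p.2 * p.1) :=
      hG.comp (by fun_prop : Measurable fun p : ℝ × ℝ => (p.1, p.2 * p.1))
    fun_prop

lemma step4_fiber {V a : ℝ} (hV : 0 < V) (ha : 0 < a) (ha1 : a ≠ 1) :
    ∫⁻ x in Ioi 0, rh (1 + x) * rh (1 + a^2 * x) * rh (-lam x (a^2 * x) V)
     = ∫⁻ x in Ioi 0, rh ((1 - x) * (a^2 * x - 1)) * rh (lam x (a^2 * x) (-V)) := by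
  set m := V / (a + 1)^2 with hm
  set M := V / (a - 1)^2 with hM
  have ha1' : a - 1 ≠ 0 := sub_ne_zero.mpr ha1
  have hm0 : 0 < m := by positivity
  have hmM : m < M := by
    rw [hm, hM]
    exact div_lt_div_of_pos_left hV (by positivity) (by nlinarith)
  have hM0 : 0 < M := hm0.trans hmM
  have hV1 : V = m * (a + 1)^2 := by rw [hm]; field_simp
  have hV2 : m * (a + 1)^2 = M * (a - 1)^2 := by rw [hm, hM]; field_simp
  have fac : ∀ X, lam X (a^2 * X) V = (a^2-1)^2 * ((X - m) * (X - M)) := by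
    intro X
    have e1 : (a^2-1)^2 * (m + M) = 2 * V * (1 + a^2) := by
      rw [hm, hM, show a^2 - 1 = (a-1)*(a+1) by ring]; field_simp; ring
    have e2 : (a^2-1)^2 * (m * M) = V^2 := by
      rw [hm, hM, show a^2 - 1 = (a-1)*(a+1) by ring]; field_simp
    unfold lam
    linear_combination X * e1 - e2
  have hsq : 0 < (a^2-1)^2 := by
    have : a^2 - 1 ≠ 0 := by
      rw [show a^2 - 1 = (a-1)*(a+1) by ring]; positivity
    positivity
  have L : ∫⁻ x in Ioi 0, rh (1 + x) * rh (1 + a^2 * x) * rh (-lam x (a^2 * x) V)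
      = KK ((a^2-1)^2 * (1 + m) * (1 + a^2 * M)) ((a^2-1)^2 * (1 + M) * (1 + a^2 * m)) := by
    rw [supp2 (s := Ioo m M) measurableSet_Ioo measurableSet_Ioi]
    · have := seg hmM ((a^2-1)^2) ((a^2-1)^2) 1 (a^2) (by positivity) (by positivity)
      rw [show (a^2-1)^2 * (1 + m) = (a^2-1)^2 + (a^2-1)^2 * m by ring,
        show (a^2-1)^2 * (1 + M) = (a^2-1)^2 + (a^2-1)^2 * M by ring, ← this]
      apply setLIntegral_congr_fun measurableSet_Ioo
      intro x hx
      have : 0 < x := hm0.trans hx.1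
      simp only []
      rw [← rh_mul _ (by positivity), ← rh_mul _ (by positivity), fac]
      congr 1; ring
    · intro x hx; exact hm0.trans hx.1
    · intro x _ hx
      have : 0 ≤ (x - m) * (x - M) := by
        by_contra h
        push Not at h
        apply hx
        constructor <;> by_contra h' <;> nlinarith
      rw [rh_of_nonpos (t := -lam x (a^2 * x) V), mul_zero]
      rw [fac]
      have := mul_nonneg hsq.le this
      linarith
  have fac2 : ∀ X, lam X (a^2 * X) (-V) = (a^2-1)^2 * ((X + m) * (X + M)) := by
    intro X
    have := fac (-X)
    unfold lam at this ⊢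
    linear_combination this
  rw [L]
  have key : ∀ s : Set ℝ, MeasurableSet s → s ⊆ Ioi 0 →
      (∀ x, x ∉ s → (1 - x) * (a^2 * x - 1) ≤ 0) →
      ∫⁻ x in Ioi 0, rh ((1 - x) * (a^2 * x - 1)) * rh (lam x (a^2 * x) (-V)) =
      ∫⁻ x in s, rh ((1 - x) * (a^2 * x - 1) * ((a^2-1)^2 * (x + m)) * (x + M)) := by
    intro s hs h1 h2
    rw [supp2 hs measurableSet_Ioi h1 (fun x _ hx => by rw [rh_of_nonpos (h2 x hx), zero_mul])]
    apply setLIntegral_congr_fun hs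
    intro x hx
    have : 0 < x := h1 hx
    simp only []
    rw [fac2, ← rh_mul' _ (by positivity)]
    congr 1; ring
  have hinv : a^2 * (1 / a^2) = 1 := by field_simp
  set b := 1 / a^2 with hb
  have hb0 : 0 < b := by positivity
  have ha2 : 0 < a^2 := by positivity
  rcases lt_or_gt_of_ne ha1 with h | h
  · have h1 : 1 < b := by
      rw [hb, lt_div_iff₀ (by positivity)]; nlinarith
    rw [key (Ioo 1 b) measurableSet_Ioo (fun x hx => lt_trans one_pos hx.1)]
    · have := seg h1 (a^2 * (a^2-1)^2 * m) (a^2 * (a^2-1)^2) M 1 (by positivity) (by positivity)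
      rw [show (a^2-1)^2 * (1 + m) * (1 + a^2 * M) = (a^2 * (a^2-1)^2 * m + a^2 * (a^2-1)^2 * 1) * (M + 1 * b) by
        linear_combination (-(a^2-1)^2 * (1 + m)) * hinv,
        show (a^2-1)^2 * (1 + M) * (1 + a^2 * m) = (a^2 * (a^2-1)^2 * m + a^2 * (a^2-1)^2 * b) * (M + 1 * 1) by
        linear_combination (-(a^2-1)^2 * (1 + M)) * hinv, ← this]
      apply setLIntegral_congr_fun measurableSet_Ioo
      intro x hx
      simp only []
      congr 1
      linear_combination ((x-1)*((a^2-1)^2 * (x + m)) * (x + M)) * hinv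
    · intro x hx
      by_contra h'
      push Not at h'
      apply hx
      have e : (1 - x) * (a^2 * x - 1) = a^2 * ((1-x) * (x - b)) := by
        linear_combination (1 - x) * hinv
      rw [e] at h'
      have := pos_of_mul_pos_right h' ha2.le
      constructor <;> by_contra h' <;> nlinarith
  · have h1 : b < 1 := by
      rw [hb, div_lt_iff₀ (by positivity)]; nlinarith
    rw [key (Ioo b 1) measurableSet_Ioo (fun x hx => hb0.trans hx.1)]
    · have := seg h1 (a^2 * (a^2-1)^2 * m) (a^2 * (a^2-1)^2) M 1 (by positivity) (by positivity)
      rw [KK_comm, show (a^2-1)^2 * (1 + m) * (1 + a^2 * M) = (a^2 * (a^2-1)^2 * m + a^2 * (a^2-1)^2 * 1) * (M + 1 * b) by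
        linear_combination (-(a^2-1)^2 * (1 + m)) * hinv,
        show (a^2-1)^2 * (1 + M) * (1 + a^2 * m) = (a^2 * (a^2-1)^2 * m + a^2 * (a^2-1)^2 * b) * (M + 1 * 1) by
        linear_combination (-(a^2-1)^2 * (1 + M)) * hinv, ← this]
      apply setLIntegral_congr_fun measurableSet_Ioo
      intro x hx
      simp only []
      congr 1
      linear_combination ((x-1)*((a^2-1)^2 * (x + m)) * (x + M)) * hinv
    · intro x hx
      by_contra h'
      push Not at h'
      apply hx
      have e : (1 - x) * (a^2 * x - 1) = a^2 * ((1-x) * (x - b)) := by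
        linear_combination (1 - x) * hinv
      rw [e] at h'
      have := pos_of_mul_pos_right h' ha2.le
      constructor <;> by_contra h' <;> nlinarith

lemma step4 {V : ℝ} (hV : 0 < V) :
    ∫⁻ X, ∫⁻ Y, wN X * wN Y * rh (-lam X Y V)
      = 2 * ∫⁻ x, ∫⁻ y, wA x * wB y * rh (lam x y (-V)) := by
  have h1 : ∫⁻ X, ∫⁻ Y, wN X * wN Y * rh (-lam X Y V)
      = ∫⁻ x, ∫⁻ y, rh x * rh y * (rh ((1 - x) * (y - 1)) * rh (lam x y (-V))) := by
    rw [polar (by fun_prop)]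
    have := polar (G := fun X Y => rh (1 + X) * rh (1 + Y) * rh (-lam X Y V)) (by fun_prop)
    rw [show ∫⁻ X, ∫⁻ Y, wN X * wN Y * rh (-lam X Y V) = ∫⁻ X, ∫⁻ Y, rh X * rh Y *
      (rh (1 + X) * rh (1 + Y) * rh (-lam X Y V)) by
        congr 1; ext X; congr 1; ext Y; unfold wN; ring, this]
    apply lintegral_congr_ae
    have h1 : ∀ᵐ q ∂(volume.restrict (Ioi (0:ℝ))), q ≠ 1 :=
      ae_restrict_of_ae (by simp [ae_iff])
    filter_upwards [h1, ae_restrict_mem measurableSet_Ioi] with q hq1 hq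
    have hq : 0 < q := hq
    have := step4_fiber (a := √q) hV (by positivity) (by
      intro h; apply hq1; rw [← Real.sq_sqrt hq.le, h]; simp)
    rw [Real.sq_sqrt hq.le] at this
    rw [this]
  have h2 : ∀ x y, rh x * rh y * (rh ((1 - x) * (y - 1)) * rh (lam x y (-V))) =
      wA x * wB y * rh (lam x y (-V)) + wA y * wB x * rh (lam y x (-V)) := by
    intro x y
    rw [show lam y x (-V) = lam x y (-V) by unfold lam; ring, ← add_mul, ← mul_assoc]
    congr 1
    by_cases hx : x ≤ 0
    · simp [wA, wB, rh_of_nonpos hx]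
    by_cases hy : y ≤ 0
    · simp [wA, wB, rh_of_nonpos hy]
    unfold wA wB
    rcases le_total x 1 with h | h
    · rw [rh_mul _ (by linarith), rh_of_nonpos (t := x - 1) (by linarith)]; ring
    · rw [show (1-x)*(y-1) = (x-1)*(1-y) by ring, rh_mul _ (by linarith),
        rh_of_nonpos (t := 1 - x) (by linarith)]; ring
  rw [h1]
  simp_rw [h2]
  have h3 : ∀ x, ∫⁻ y, (wA x * wB y * rh (lam x y (-V)) + wA y * wB x * rh (lam y x (-V))) =
     (∫⁻ y, wA x * wB y * rh (lam x y (-V))) + ∫⁻ y, wA y * wB x * rh (lam y x (-V)) := by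
    intro x
    rw [lintegral_add_left (by fun_prop)]
  simp_rw [h3]
  rw [lintegral_add_left (by apply meas_int; fun_prop), swap2 (f := fun x y => wA y * wB x * rh (lam y x (-V))) (by fun_prop), two_mul]

end SW

namespace SW

/-- positive indicator -/
noncomputable def sg (t : ℝ) : ENNReal := (Ioi (0:ℝ)).indicator 1 t

@[fun_prop] lemma measurable_sg : Measurable sg := measurable_one.indicator measurableSet_Ioi
lemma sg_pos {t : ℝ} (h : 0 < t) : sg t = 1 := by simp [sg, h]
lemma sg_neg {t : ℝ} (h : t ≤ 0) : sg t = 0 := by simp [sg, h]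

lemma lam_fac {x y : ℝ} (hx : 0 ≤ x) (hy : 0 ≤ y) (z : ℝ) :
    lam x y z = (z - (√y - √x)^2) * (z - (√y + √x)^2) := by
  have h1 := Real.sq_sqrt hx
  have h2 := Real.sq_sqrt hy
  have : lam x y z = lam (√x^2) (√y^2) z := by rw [h1, h2]
  rw [this]; unfold lam; ring

lemma step5_fiber {x y : ℝ} (hx : x ∈ Ioo (0:ℝ) 1) (hy : y ∈ Ioi (1:ℝ)) (hne : (√y - √x)^2 ≠ 1) :
    (∫⁻ z, rh (-z) * rh (1 - z) * rh (lam x y z)) + ∫⁻ z, sg (√z - √x - √y) * wB z * rh (lam x y z)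
    = (∫⁻ z, wA z * rh (-lam x y z)) + ∫⁻ z, sg (√y - √x - √z) * wB z * rh (lam x y z) := by
  have hx0 : 0 < x := hx.1
  have hy0 : (1:ℝ) < y := hy
  have ha : 0 < √x := by positivity
  have ha1 : √x < 1 := by rw [Real.sqrt_lt' one_pos]; simpa using hx.2
  have hb1 : 1 < √y := by rw [Real.lt_sqrt (by norm_num)]; simpa using hy0
  have fac := lam_fac hx0.le (by linarith : 0 ≤ y)
  set a := √x
  set b := √y
  set m := (b - a)^2 with hm
  set M := (b + a)^2 with hM
  have hba : 0 < b - a := by linarith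
  have hm0 : 0 < m := by positivity
  have hmM : m < M := by nlinarith
  have hM1 : 1 < M := by nlinarith
  have Lft : (∫⁻ z, rh (-z) * rh (1 - z) * rh (lam x y z)) +
      ∫⁻ z, sg (√z - a - b) * wB z * rh (lam x y z)
      = ∫⁻ z in Iio 0 ∪ Ioi M, rh (z * (z - 1) * (z - m) * (z - M)) := by
    rw [lintegral_union measurableSet_Ioi]
    · congr 1
      · rw [supp (s := Iio 0) measurableSet_Iio]
        · apply setLIntegral_congr_fun measurableSet_Iio
          intro z hz
          have hz : z < 0 := hz
          simp only []
          rw [← rh_mul _ (by linarith), ← rh_mul _ (by nlinarith), fac]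
          congr 1; ring
        · intro z hz
          rw [rh_of_nonpos (t := -z) (by simpa using hz)]; simp
      · rw [supp (s := Ioi M) measurableSet_Ioi]
        · apply setLIntegral_congr_fun measurableSet_Ioi
          intro z hz
          have hz : M < z := hz
          have : a + b < √z := by
            rw [Real.lt_sqrt (by positivity)]; rw [add_comm]; exact hz
          simp only []
          unfold wB
          rw [sg_pos (by linarith), one_mul, ← rh_mul _ (by linarith), ← rh_mul _ (by nlinarith), fac]
          congr 1; ring
        · intro z hz
          have hz : z ≤ M := by simpa using hz
          have : √z ≤ a + b := by
            exact Real.sqrt_le_iff.mpr ⟨by positivity, by rw [add_comm a b]; exact hz⟩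
          rw [sg_neg (by linarith)]; simp
    · rw [Set.disjoint_left]
      intro z h1 h2
      have h1 : z < 0 := h1
      have h2 : M < z := h2
      linarith
  rw [Lft]
  rcases lt_or_gt_of_ne hne with h | h
  · have e4 : ∫⁻ z, sg (b - a - √z) * wB z * rh (lam x y z) = 0 := by
      rw [lintegral_eq_zero_iff (by fun_prop)]
      filter_upwards with z
      by_cases hz : 1 < z
      · have h1 : 1 < √z := by rw [Real.lt_sqrt (by norm_num)]; simpa using hz
        rw [sg_neg (by nlinarith)]; simp
      · rw [wB_zero (by simpa using hz)]; simp
    rw [e4, add_zero, supp (s := Ioo m 1) measurableSet_Ioo]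
    · have := outer hm0 h hM1
      simp only [sub_zero] at this
      rw [show ∫⁻ z in Iio 0 ∪ Ioi M, rh (z * (z - 1) * (z - m) * (z - M)) =
        ∫⁻ z in Iio 0 ∪ Ioi M, rh (z * (z - m) * (z - 1) * (z - M)) by
        congr 1; ext z; congr 1; ring, this]
      apply setLIntegral_congr_fun measurableSet_Ioo
      intro z hz
      have h1 := hz.1
      have h2 := hz.2
      simp only []
      unfold wA
      rw [← rh_mul _ (by linarith), ← rh_mul _ (by nlinarith), fac]
      congr 1; ring
    · intro z hz
      by_cases hz1 : z ∈ Ioo 0 1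
      · have : z ≤ m := by
          by_contra h'
          exact hz ⟨by linarith, hz1.2⟩
        rw [rh_of_nonpos (t := -lam x y z), mul_zero]
        rw [fac]; nlinarith
      · rw [wA_zero hz1, zero_mul]
  · have e4 : ∫⁻ z, wA z * rh (-lam x y z) = 0 := by
      rw [lintegral_eq_zero_iff (by fun_prop)]
      filter_upwards with z
      by_cases hz : z ∈ Ioo 0 1
      · rw [rh_of_nonpos (t := -lam x y z)]; · simp
        rw [fac]; nlinarith [hz.2]
      · rw [wA_zero hz]; simp
    rw [e4, zero_add, supp (s := Ioo 1 m) measurableSet_Ioo]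
    · have := outer one_pos h hmM
      simp only [sub_zero] at this
      rw [this]
      apply setLIntegral_congr_fun measurableSet_Ioo
      intro z hz
      have h1 := hz.1
      have h2 := hz.2
      have h3 : √z < b - a := by
        rw [Real.sqrt_lt' hba]; exact h2
      simp only []
      unfold wB
      rw [sg_pos (by linarith), one_mul, ← rh_mul _ (by linarith), ← rh_mul _ (by nlinarith), fac]
      congr 1; ring
    · intro z hz
      by_cases hz1 : 1 < z
      · have : m ≤ z := by
          by_contra h'
          exact hz ⟨hz1, by linarith⟩
        have h3 : b - a ≤ √z := by
          rw [Real.le_sqrt' hba]; exact this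
        rw [sg_neg (by linarith)]; simp
      · rw [wB_zero (by simpa using hz1)]; simp

lemma rh_anti {s t : ℝ} (hs : 0 < s) (h : s ≤ t) : rh t ≤ rh s := by
  unfold rh
  apply ENNReal.ofReal_le_ofReal
  gcongr

lemma E1_inner {x y : ℝ} (hx : x ∈ Ioo (0:ℝ) 1) (hy : y ∈ Ioi (1:ℝ)) :
    ∫⁻ z, sg (√z - √x - √y) * wB z * rh (lam x y z) ≤ ENNReal.ofReal π * rh (2 * √x) * rh y := by
  have hx0 : 0 < x := hx.1
  have hy0 : (1:ℝ) < y := hy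
  have ha : 0 < √x := by positivity
  have ha1 : √x < 1 := by rw [Real.sqrt_lt' one_pos]; simpa using hx.2
  have hb1 : 1 < √y := by rw [Real.lt_sqrt (by norm_num)]; simpa using hy0
  have fac := lam_fac hx0.le (by linarith : 0 ≤ y)
  have hyb : y = √y^2 := (Real.sq_sqrt (by linarith)).symm
  set a := √x
  set b := √y
  set M := (b + a)^2 with hM
  have hM1 : 1 < M := by nlinarith
  have hb := base (a := 2 * a) (b := 1) (by positivity) one_pos
  rw [mul_one] at hb
  rw [← hb, mul_comm, ← lintegral_const_mul' _ _ (by simp [rh]), aff 1 M one_ne_zero, supp (s := Ioi 0) measurableSet_Ioi]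
  · simp only [abs_one, ENNReal.ofReal_one, one_mul]
    apply setLIntegral_mono' measurableSet_Ioi
    intro s hs
    have hs : 0 < s := hs
    have h0 : 0 < 2 * a + s := by positivity
    rw [fac, show s + M - (b - a)^2 = s + 4 * (a * b) by rw [hM]; ring, add_sub_cancel_right,
      rh_mul _ (by positivity), ← rh_mul_self h0.le]
    unfold wB
    have b1 : sg (√(s + M) - a - b) ≤ 1 := by
      unfold sg; exact Set.indicator_le_self' (by simp) _
    have b2 : rh (s + M) ≤ rh y := rh_anti (by linarith) (by nlinarith)
    have b3 : rh (s + M - 1) ≤ rh (2 * a + s) := rh_anti h0 (by nlinarith)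
    have b4 : rh (s + 4 * (a * b)) ≤ rh (2 * a + s) := rh_anti h0 (by nlinarith)
    calc _ ≤ 1 * (rh y * rh (2 * a + s)) * (rh (2 * a + s) * rh s) := by gcongr
      _ = _ := by ring
  · intro z hz
    have hz : z ≤ 0 := by simpa using hz
    have : √(1 * z + M) ≤ a + b := by
      exact Real.sqrt_le_iff.mpr ⟨by positivity, by rw [add_comm a b, ← hM]; linarith⟩
    rw [sg_neg (by linarith)]; simp

lemma E1_fin : ∫⁻ x, ∫⁻ y, wA x * wB y * ∫⁻ z, sg (√z - √x - √y) * wB z * rh (lam x y z) < ⊤ := by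
  have i1 : ∫⁻ y, wB y * rh y < ⊤ := by
    rw [aff 1 1 one_ne_zero, supp (s := Ioi 0) measurableSet_Ioi]
    · have hb := base (a := 1) (b := 1) one_pos one_pos
      simp only [abs_one, ENNReal.ofReal_one, one_mul]
      rw [show ∫⁻ x in Ioi 0, wB (x + 1) * rh (x + 1) = ∫⁻ t in Ioi 0, rh t * iv (1 + 1 * t) by
        apply setLIntegral_congr_fun measurableSet_Ioi
        intro s hs
        have hs : 0 < s := hs
        simp only [wB, add_sub_cancel_right, one_mul]
        rw [add_comm 1 s, ← rh_mul_self (by linarith)]; ring, hb]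
      simp [rh, ENNReal.mul_lt_top]
    · intro z hz
      have hz : z ≤ 0 := by simpa using hz
      rw [wB_zero (by simp [hz])]; simp
  have i2 : ∫⁻ x, wA x * rh (2 * √x) < ⊤ := by
    rw [supp (s := Ioi 0) measurableSet_Ioi, sqcov]
    · calc _ ≤ ∫⁻ u in Ioi (0:ℝ), 2 * (rh ((u - 0) * (1 - u)) * iv (1 + 0 * u)) := by
            apply setLIntegral_mono' measurableSet_Ioi
            intro u hu
            have hu : 0 < u := hu
            rw [Real.sqrt_sq hu.le]
            by_cases h1 : u < 1
            · unfold wA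
              rw [rh_sq hu.le, sub_zero, rh_mul _ hu.le, zero_mul, add_zero,
                show ENNReal.ofReal (2 * u) * (iv u * rh (1 - u^2) * rh (2 * u)) =
                (ENNReal.ofReal (2 * u) * iv u) * (rh (2 * u) * rh (1 - u^2)) by ring,
                ofReal_mul_iv (by positivity)]
              have : 2 * u / u = 2 := by field_simp
              rw [this]
              have h2 : rh (2 * u) ≤ rh u := rh_anti hu (by linarith)
              have h3 : rh (1 - u^2) ≤ rh (1 - u) := rh_anti (by linarith) (by nlinarith)
              have h4 : iv 1 = 1 := by simp [iv]
              rw [h4, mul_one]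
              have h5 : ENNReal.ofReal 2 = 2 := by simp
              rw [h5]
              gcongr
            · rw [wA_zero]; · simp
              intro h
              nlinarith [h.2]
        _ = 2 * ∫⁻ u in Ioo (0:ℝ) 1, (rh ((u - 0) * (1 - u)) * iv (1 + 0 * u)) := by
            rw [lintegral_const_mul' _ _ (by simp)]
            congr 1
            rw [supp2 measurableSet_Ioo measurableSet_Ioi (fun u hu => hu.1)]
            intro u hu hu'
            have hu : 0 < u := hu
            have : 1 ≤ u := by
              by_contra h; exact hu' ⟨hu, by linarith⟩
            rw [rh_of_nonpos (by nlinarith), zero_mul]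
        _ < ⊤ := by
            rw [arcsine one_pos 1 0 (by norm_num) (by norm_num)]
            simp [rh, ENNReal.mul_lt_top]
    · intro z hz
      have hz : z ≤ 0 := by simpa using hz
      rw [wA_zero (by intro h; linarith [h.1])]; simp
  calc _ ≤ ∫⁻ x, ∫⁻ y, ENNReal.ofReal π * (wA x * rh (2 * √x)) * (wB y * rh y) := by
        refine lintegral_mono fun x => lintegral_mono fun y => ?_
        by_cases hx : x ∈ Ioo (0:ℝ) 1
        · by_cases hy : y ∈ Ioi (1:ℝ)
          · calc _ ≤ wA x * wB y * (ENNReal.ofReal π * rh (2 * √x) * rh y) := by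
                  gcongr; exact E1_inner hx hy
              _ = _ := by ring
          · simp [wB_zero hy]
        · simp [wA_zero hx]
    _ = ENNReal.ofReal π * (∫⁻ x, wA x * rh (2 * √x)) * ∫⁻ y, wB y * rh y := by
        simp_rw [lintegral_const_mul _ (show Measurable fun y => wB y * rh y by fun_prop)]
        rw [lintegral_mul_const _ (by fun_prop), lintegral_const_mul _ (by fun_prop)]
    _ < ⊤ := ENNReal.mul_lt_top (ENNReal.mul_lt_top ENNReal.ofReal_lt_top i2) i1

/-- mixed triple integral -/
noncomputable def AAB : ENNReal := ∫⁻ x, ∫⁻ y, ∫⁻ z, wA x * wB y * (wA z * rh (-lam x y z))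

/-- the main triple integral -/
noncomputable def Z1 : ENNReal := ∫⁻ V, ∫⁻ X, ∫⁻ Y, wN V * (wN X * wN Y * rh (-lam X Y V))

lemma wA_ne_top (x : ℝ) : wA x ≠ ⊤ := by simp [wA, rh, ENNReal.mul_eq_top]
lemma wB_ne_top (x : ℝ) : wB x ≠ ⊤ := by simp [wB, rh, ENNReal.mul_eq_top]
lemma wN_ne_top (x : ℝ) : wN x ≠ ⊤ := by simp [wN, rh, ENNReal.mul_eq_top]

lemma step5 : ∫⁻ x, ∫⁻ y, ∫⁻ z, wA x * wB y * (rh (-z) * rh (1 - z) * rh (lam x y z)) = AAB := by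
  set f1 : ℝ → ℝ → ENNReal := fun x y => ∫⁻ z, rh (-z) * rh (1 - z) * rh (lam x y z) with hf1
  set f2 : ℝ → ℝ → ENNReal := fun x y => ∫⁻ z, sg (√z - √x - √y) * wB z * rh (lam x y z) with hf2
  set f3 : ℝ → ℝ → ENNReal := fun x y => ∫⁻ z, wA z * rh (-lam x y z) with hf3
  set f4 : ℝ → ℝ → ENNReal := fun x y => ∫⁻ z, sg (√y - √x - √z) * wB z * rh (lam x y z) with hf4
  have m1 : Measurable fun p : ℝ × ℝ => f1 p.1 p.2 := by
    apply meas_int; fun_prop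
  have m3 : Measurable fun p : ℝ × ℝ => f3 p.1 p.2 := by
    apply meas_int; fun_prop
  have key : ∫⁻ x, ∫⁻ y, wA x * wB y * (f1 x y + f2 x y) = ∫⁻ x, ∫⁻ y, wA x * wB y * (f3 x y + f4 x y) := by
    congr 1; ext x
    by_cases hx : x ∈ Ioo (0:ℝ) 1
    · apply lintegral_congr_ae
      have h1 : ∀ᵐ y : ℝ, y ≠ (1 + √x)^2 := by simp [ae_iff]
      filter_upwards [h1] with y hy
      by_cases hy1 : y ∈ Ioi (1:ℝ)
      · congr 1
        apply step5_fiber hx hy1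
        intro h
        apply hy
        have hy1 : (1:ℝ) < y := hy1
        have ha1 : √x < 1 := by rw [Real.sqrt_lt' one_pos]; simpa using hx.2
        have hb1 : 1 < √y := by rw [Real.lt_sqrt (by norm_num)]; simpa using hy1
        have : √y - √x = 1 := by nlinarith
        rw [← this, sub_add_cancel, Real.sq_sqrt (by linarith)]
      · simp [wB_zero hy1]
    · simp [wA_zero hx]
  have split : ∀ f g : ℝ → ℝ → ENNReal, (Measurable fun p : ℝ × ℝ => f p.1 p.2) →
      ∫⁻ x, ∫⁻ y, wA x * wB y * (f x y + g x y) =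
      (∫⁻ x, ∫⁻ y, wA x * wB y * f x y) + ∫⁻ x, ∫⁻ y, wA x * wB y * g x y := by
    intro f g hf
    simp_rw [mul_add]
    rw [← lintegral_add_left]
    · congr 1; ext x
      rw [lintegral_add_left]
      have : Measurable fun y => f x y := hf.comp (by fun_prop : Measurable fun y : ℝ => (x, y))
      fun_prop
    · apply meas_int; fun_prop
  rw [split f1 f2 m1, split f3 f4 m3] at key
  have E : ∫⁻ x, ∫⁻ y, wA x * wB y * f2 x y = ∫⁻ x, ∫⁻ y, wA x * wB y * f4 x y := by
    simp_rw [hf2, hf4]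
    have hh : ∀ x y, wA x * wB y ≠ ⊤ := fun x y => ENNReal.mul_ne_top (wA_ne_top x) (wB_ne_top y)
    simp_rw [← lintegral_const_mul' _ _ (hh _ _)]
    rw [swap_in (by fun_prop)]
    congr 1; ext x; congr 1; ext y; congr 1; ext z
    rw [show lam x z y = lam x y z by unfold lam; ring,
      show √y - √x - √z = √y - √x - √z by ring]
    ring
  rw [← E] at key
  have := (ENNReal.add_left_inj E1_fin.ne).mp key
  have hh : ∀ x y, wA x * wB y ≠ ⊤ := fun x y => ENNReal.mul_ne_top (wA_ne_top x) (wB_ne_top y)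
  unfold AAB
  simp_rw [lintegral_const_mul' _ _ (hh _ _)]
  exact this

lemma Z1_eq : Z1 = 2 * AAB := by
  unfold Z1
  rw [← step5, swap_in (by fun_prop), swap_out (by fun_prop)]
  rw [swap_in (by fun_prop), swap_out (by fun_prop)]
  have e1 : ∀ V, ∫⁻ X, ∫⁻ Y, wN V * (wN X * wN Y * rh (-lam X Y V)) =
      2 * ∫⁻ x, ∫⁻ y, wN V * (wA x * wB y * rh (lam x y (-V))) := by
    intro V
    by_cases hV : V ∈ Ioi (0:ℝ)
    · simp_rw [lintegral_const_mul' _ _ (wN_ne_top V)]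
      rw [step4 hV]; ring
    · simp [wN_zero hV]
  rw [swap_out (by fun_prop), swap_in (by fun_prop), swap_out (by fun_prop), swap_in (by fun_prop)]
  simp_rw [e1]
  rw [lintegral_const_mul' _ _ (by simp)]
  congr 1
  rw [aff (-1) 0 (by norm_num)]
  simp only [abs_neg, abs_one, ENNReal.ofReal_one, one_mul]
  rw [swap_out (by fun_prop), swap_in (by fun_prop)]
  congr 1; ext x; congr 1; ext y; congr 1; ext z
  simp only [neg_mul, one_mul, add_zero, neg_neg, wN, ← sub_eq_add_neg]
  ring
end SW

namespace SW

lemma rhsq (g : ℝ → ENNReal) : ∫⁻ x, rh x * g x = 2 * ∫⁻ a, sg a * g (a^2) := by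
  rw [supp (s := Ioi 0) measurableSet_Ioi (f := fun x => rh x * g x), sqcov,
    supp (s := Ioi 0) measurableSet_Ioi (f := fun x => sg x * g (x^2)), ← lintegral_const_mul' _ _ (by simp)]
  · apply setLIntegral_congr_fun measurableSet_Ioi
    intro u hu
    have hu : 0 < u := hu
    simp only []
    rw [rh_sq hu.le, sg_pos hu, one_mul, ← mul_assoc, ofReal_mul_iv (by positivity)]
    congr 1
    rw [mul_div_assoc, div_self hu.ne']; simp
  · intro x hx
    rw [sg_neg (by simpa using hx), zero_mul]
  · intro x hx
    rw [rh_of_nonpos (by simpa using hx), zero_mul]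

lemma lin2 {c : ℝ} (hc : 0 < c) {F : ℝ → ℝ → ENNReal} (hF : Measurable fun p : ℝ × ℝ => F p.1 p.2) :
    ∫⁻ a, ∫⁻ b, F a b = ENNReal.ofReal (c^2/2) *
      ∫⁻ u, ∫⁻ v, F (c / 2 * (v - u)) (c / 2 * (u + v)) := by
  have e1 : ∀ a, ∫⁻ b, F a b = ENNReal.ofReal c * ∫⁻ v, F a (c * v - a) := by
    intro a
    rw [aff c (-a) hc.ne', abs_of_pos hc]; rfl
  simp_rw [e1]
  rw [lintegral_const_mul' _ _ ENNReal.ofReal_ne_top, swap2]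
  · have e2 : ∀ v, ∫⁻ a, F a (c * v - a) = ENNReal.ofReal (c/2) * ∫⁻ u, F (c / 2 * (v - u)) (c / 2 * (u + v)) := by
      intro v
      rw [aff (-(c/2)) (c/2*v) (by linarith), abs_neg, abs_of_pos (by linarith)]
      congr 1; congr 1; ext u; congr 1 <;> ring
    simp_rw [e2]
    rw [lintegral_const_mul' _ _ ENNReal.ofReal_ne_top, ← mul_assoc, ← ENNReal.ofReal_mul hc.le, swap2]
    · congr 2; ring
    · exact hF.comp (by fun_prop : Measurable fun p : ℝ × ℝ => (c / 2 * (p.1 - p.2), c / 2 * (p.2 + p.1)))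
  · exact hF.comp (by fun_prop : Measurable fun p : ℝ × ℝ => (p.1, c * p.2 - p.1))

lemma covinv (f : ℝ → ENNReal) :
    ∫⁻ c in Ioi 0, f c = ∫⁻ k in Ioi (0:ℝ), ENNReal.ofReal (2 / k^2) * f (2 / k) := by
  rw [cov_inv (s := Ioi 0) (t := Ioi 0) (g := fun k => 2 / k) (g' := fun k => -(2 / k^2))
    (k := fun k => 2 / k) measurableSet_Ioi]
  · apply setLIntegral_congr_fun measurableSet_Ioi
    intro u hu
    have hu : 0 < u := hu
    simp only [abs_neg]
    rw [abs_of_pos (by positivity)]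
  · intro x hx
    have hx : 0 < x := hx
    have := (hasDerivAt_inv hx.ne').const_mul 2
    exact (this.congr_deriv (by ring))
  · intro x hx
    have hx : 0 < x := hx
    have : 0 < 2 / x := by positivity
    exact this
  · intro x hx
    have hx : 0 < x := hx
    have : 0 < 2 / x := by positivity
    exact this
  · intro x hx
    have hx : 0 < x := hx
    field_simp
  · intro x hx
    have hx : 0 < x := hx
    field_simp

lemma rh_scale {k : ℝ} (hk : 0 < k) (t : ℝ) : rh ((1 / k)^2 * t) = ENNReal.ofReal k * rh t := by
  rw [rh_mul _ (by positivity), rh_sq (by positivity)]; simp [iv]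

lemma lamsq (a b c : ℝ) : -lam (a^2) (b^2) (c^2) = ((a+b)^2 - c^2) * (c^2 - (a-b)^2) := by
  unfold lam; ring

lemma rh_lamsq {a b : ℝ} (c : ℝ) (ha : 0 < a) (hb : 0 < b) :
    rh (-lam (a^2) (b^2) (c^2)) = rh ((a+b)^2 - c^2) * rh (c^2 - (a-b)^2) := by
  rw [lamsq, rh_mul_add]; nlinarith [mul_pos ha hb]

lemma dual_pt {k u v : ℝ} (hk : 0 < k) :
    ENNReal.ofReal (2 / k^2) * (ENNReal.ofReal ((2/k)^2/2) *
      (sg ((2/k) / 2 * (v - u)) * sg ((2/k) / 2 * (u + v)) * (rh (1 - ((2/k) / 2 * (v - u))^2) *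
        rh (((2/k) / 2 * (u + v))^2 - 1) * rh (1 - (2/k)^2) *
        rh (-lam (((2/k) / 2 * (v - u))^2) (((2/k) / 2 * (u + v))^2) ((2/k)^2)))))
    = ENNReal.ofReal k * (sg u * sg v * (rh (1 - u^2) * rh (v^2 - 1) * rh (k^2 - 4) *
        rh (-lam (u^2) (v^2) (k^2)))) := by
  have e0 : (2/k) / 2 = 1 / k := by field_simp
  rw [e0]
  have hk' : 0 < 1 / k := by positivity
  have r1 : 1 - (1/k * (v-u))^2 = (1/k)^2 * (k^2 - (u - v)^2) := by field_simp; ring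
  have r2 : (1/k * (u+v))^2 - 1 = (1/k)^2 * ((u + v)^2 - k^2) := by field_simp
  have r3 : 1 - (2/k)^2 = (1/k)^2 * (k^2 - 4) := by field_simp; ring
  have r4 : (1/k * (v-u) + 1/k * (u+v))^2 - (2/k)^2 = (1/(k/2))^2 * (v^2 - 1) := by field_simp; ring
  have r5 : (2/k)^2 - (1/k * (v-u) - 1/k * (u+v))^2 = (1/(k/2))^2 * (1 - u^2) := by field_simp; ring
  by_cases h : 0 < u ∧ u < 1 ∧ 1 < v
  · obtain ⟨h1, h2, h3⟩ := h
    have ha : 0 < 1/k * (v - u) := mul_pos hk' (by linarith)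
    have hb : 0 < 1/k * (u + v) := mul_pos hk' (by linarith)
    rw [sg_pos ha, sg_pos hb, sg_pos h1, sg_pos (by linarith : 0 < v), rh_lamsq _ ha hb,
      rh_lamsq _ h1 (by linarith), r1, r2, r3, r4, r5]
    have hk2 : 0 < k / 2 := by positivity
    simp only [rh_scale hk, rh_scale hk2]
    have : ENNReal.ofReal k = ENNReal.ofReal (2 / k^2) * ENNReal.ofReal ((2/k)^2/2) *
       ENNReal.ofReal k * ENNReal.ofReal k * ENNReal.ofReal k * ENNReal.ofReal (k/2) * ENNReal.ofReal (k/2) := by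
      repeat rw [← ENNReal.ofReal_mul (by positivity)]
      congr 1; field_simp
    conv_rhs => rw [this]
    ring
  · have R : sg u * sg v * (rh (1 - u^2) * rh (v^2 - 1) * rh (k^2 - 4) *
        rh (-lam (u^2) (v^2) (k^2))) = 0 := by
      by_cases h1 : 0 < u
      · by_cases h2 : 0 < v
        · by_cases h3 : u < 1
          · rw [rh_of_nonpos (t := v^2 - 1)]; · simp
            have : ¬ 1 < v := fun h4 => h ⟨h1, h3, h4⟩
            nlinarith
          · rw [rh_of_nonpos (t := 1 - u^2)]; · simp
            nlinarith
        · rw [sg_neg (t := v) (by linarith)]; simp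
      · rw [sg_neg (t := u) (by linarith)]; simp
    rw [R, mul_zero]
    by_cases ha : 0 < 1/k * (v - u)
    swap
    · rw [sg_neg (t := 1/k * (v - u)) (by linarith)]; simp
    by_cases hb : 0 < 1/k * (u + v)
    swap
    · rw [sg_neg (t := 1/k * (u + v)) (by linarith)]; simp
    by_cases ha1 : 1/k * (v - u) < 1
    swap
    · rw [rh_of_nonpos (t := 1 - (1/k * (v-u))^2) (by nlinarith)]; simp
    by_cases hb1 : 1 < 1/k * (u + v)
    swap
    · rw [rh_of_nonpos (t := (1/k * (u+v))^2 - 1) (by nlinarith)]; simp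
    have hu : 0 < u := by
      have : 0 < 1/k * (2 * u) := by
        have : 1/k * (2*u) = 1/k * (u+v) - 1/k * (v-u) := by ring
        linarith
      have := pos_of_mul_pos_right this hk'.le
      linarith
    have hv : 0 < v := by
      have := pos_of_mul_pos_right ha hk'.le
      linarith
    rw [rh_lamsq _ ha hb, r4, r5]
    by_cases h1 : u < 1
    · rw [rh_of_nonpos (t := (1/(k/2))^2 * (v^2 - 1))]; · simp
      have : ¬ 1 < v := fun h4 => h ⟨hu, h1, h4⟩
      apply mul_nonpos_of_nonneg_of_nonpos (by positivity)
      nlinarith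
    · rw [rh_of_nonpos (t := (1/(k/2))^2 * (1 - u^2))]; · simp
      apply mul_nonpos_of_nonneg_of_nonpos (by positivity)
      nlinarith

/-- dual triple integral -/
noncomputable def kap : ENNReal := ∫⁻ w, ∫⁻ x, ∫⁻ y, wA x * wB y * (rh (w - 4) * rh (-lam x y w))

/-- two consecutive square substitutions -/
lemma rhsq2 {G : ℝ → ℝ → ENNReal} (hG : Measurable fun p : ℝ × ℝ => G p.1 p.2) :
    ∫⁻ x, ∫⁻ y, rh x * (rh y * G x y) = 4 * ∫⁻ a, ∫⁻ b, sg a * sg b * G (a^2) (b^2) := by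
  have h : ∀ x, rh x ≠ ⊤ := by simp [rh]
  have h' : ∀ x, sg x ≠ ⊤ := by
    intro x; unfold sg; by_cases hx : 0 < x <;> simp [hx]
  simp_rw [lintegral_const_mul' _ _ (h _), rhsq, mul_assoc, lintegral_const_mul' _ _ (h' _)]
  rw [show (4:ENNReal) = 2 * 2 by norm_num, mul_assoc]
  congr 1
  rw [← lintegral_const_mul' _ _ (by simp)]
  congr 1; ext a; ring

lemma AAB_len : AAB = 8 * ∫⁻ c in Ioi 0, ∫⁻ a, ∫⁻ b, sg a * sg b * (rh (1 - a^2) * rh (b^2 - 1) *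
    rh (1 - c^2) * rh (-lam (a^2) (b^2) (c^2))) := by
  unfold AAB
  rw [swap_in (by fun_prop), swap_out (by fun_prop)]
  have h : ∀ x, rh x ≠ ⊤ := by simp [rh]
  have e1 : ∀ z, ∫⁻ x, ∫⁻ y, wA x * wB y * (wA z * rh (-lam x y z)) = rh z * (4 * ∫⁻ a, ∫⁻ b,
     sg a * sg b * (rh (1 - a^2) * rh (b^2 - 1) * rh (1 - z) * rh (-lam (a^2) (b^2) z))) := by
    intro z
    rw [← rhsq2 (G := fun x y => (rh (1 - x) * rh (y - 1) * rh (1 - z) * rh (-lam x y z))) (by fun_prop),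
      ← lintegral_const_mul' _ _ (h _)]
    congr 1; ext x
    rw [← lintegral_const_mul' _ _ (h _)]
    congr 1; ext y
    unfold wA wB; ring
  simp_rw [e1]
  rw [rhsq, supp (s := Ioi 0) measurableSet_Ioi]
  · rw [show (8:ENNReal) = 2 * 4 by norm_num, mul_assoc]
    congr 1
    rw [← lintegral_const_mul' _ _ (by simp)]
    apply setLIntegral_congr_fun measurableSet_Ioi
    intro c hc
    have hc : 0 < c := hc
    simp only []
    rw [sg_pos hc, one_mul]
  · intro c hc
    rw [sg_neg (by simpa using hc), zero_mul]

lemma kap_len : kap = 8 * ∫⁻ k in Ioi 0, ∫⁻ u, ∫⁻ v, ENNReal.ofReal k * (sg u * sg v *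
    (rh (1 - u^2) * rh (v^2 - 1) * rh (k^2 - 4) * rh (-lam (u^2) (v^2) (k^2)))) := by
  unfold kap
  have h : ∀ x, rh x ≠ ⊤ := by simp [rh]
  have e1 : ∀ z, ∫⁻ x, ∫⁻ y, wA x * wB y * (rh (z - 4) * rh (-lam x y z)) = rh z * (ENNReal.ofReal √z *
     (4 * ∫⁻ a, ∫⁻ b,
     sg a * sg b * (rh (1 - a^2) * rh (b^2 - 1) * rh (z - 4) * rh (-lam (a^2) (b^2) z)))) := by
    intro z
    by_cases hz : 4 < z
    · have : rh z * ENNReal.ofReal √z = 1 := by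
        rw [mul_comm, rh_sqrt, ofReal_mul_iv (by positivity), div_self]
        · simp
        · exact (Real.sqrt_pos.mpr (by linarith)).ne'
      rw [← mul_assoc, this, one_mul, ← rhsq2 (G := fun x y => (rh (1 - x) * rh (y - 1) * rh (z - 4) * rh (-lam x y z))) (by fun_prop)]
      congr 1; ext x
      congr 1; ext y
      unfold wA wB; ring
    · simp [rh_of_nonpos (show z - 4 ≤ 0 by linarith)]
  simp_rw [e1]
  rw [rhsq, supp (s := Ioi 0) measurableSet_Ioi]
  · rw [show (8:ENNReal) = 2 * 4 by norm_num, mul_assoc]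
    congr 1
    rw [← lintegral_const_mul' _ _ (by simp)]
    apply setLIntegral_congr_fun measurableSet_Ioi
    intro c hc
    have hc : 0 < c := hc
    simp only []
    rw [sg_pos hc, one_mul, Real.sqrt_sq hc.le]
    simp_rw [lintegral_const_mul' _ _ ENNReal.ofReal_ne_top]
    ring
  · intro c hc
    rw [sg_neg (by simpa using hc), zero_mul]

lemma step6 : AAB = kap := by
  rw [AAB_len, kap_len]
  congr 1
  rw [covinv]
  apply setLIntegral_congr_fun measurableSet_Ioi
  intro k hk
  have hk : 0 < k := hk
  simp only []
  rw [lin2 (c := 2 / k) (by positivity) (by fun_prop)]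
  simp_rw [← dual_pt hk]
  simp_rw [lintegral_const_mul' _ _ ENNReal.ofReal_ne_top]

/-- Watson type triple integral -/
noncomputable def W1 : ENNReal := ∫⁻ x, ∫⁻ y, ∫⁻ w, wA x * wA y * (rh (4 - w) * rh (-lam x y w))

lemma step7a {x w : ℝ} (hx : x ∈ Ioo (0:ℝ) 1) (hw : 4 < w) :
    ∫⁻ y, wB y * rh (-lam x y w) = ∫⁻ y, wA y * rh (lam x y w) := by
  have hx0 : 0 < x := hx.1
  have ha : 0 < √x := by positivity
  have ha1 : √x < 1 := by rw [Real.sqrt_lt' one_pos]; simpa using hx.2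
  have hb1 : 2 < √w := by rw [Real.lt_sqrt (by norm_num)]; linarith
  have fac : ∀ y, lam x y w = (y - (√w - √x)^2) * (y - (√w + √x)^2) := by
    intro y
    rw [← lam_fac hx0.le (by linarith : 0 ≤ w) y]; unfold lam; ring
  set a := √x
  set b := √w
  set m := (b - a)^2 with hm
  set M := (b + a)^2 with hM
  have hmM : m < M := by nlinarith
  have hm1 : 1 < m := by nlinarith
  rw [supp (s := Ioo m M) measurableSet_Ioo, supp (s := Ioo 0 1) measurableSet_Ioo]
  · have s1 := seg hmM 0 1 (-1) 1 (by linarith) (by linarith)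
    have s2 := seg one_pos m (-1) M (-1) (by linarith) (by linarith)
    rw [show (0 + 1 * m) * (-1 + 1 * M) = (m + -1 * 0) * (M + -1 * 1) by ring,
      show (0 + 1 * M) * (-1 + 1 * m) = (m + -1 * 1) * (M + -1 * 0) by ring, ← s2] at s1
    convert s1 using 1
    · apply setLIntegral_congr_fun measurableSet_Ioo
      intro y hy
      have := hy.1
      simp only [wB]
      rw [← rh_mul _ (by linarith), ← rh_mul _ (by nlinarith), fac]
      congr 1; ring
    · apply setLIntegral_congr_fun measurableSet_Ioo
      intro y hy
      have := hy.1
      have := hy.2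
      simp only [wA]
      rw [← rh_mul _ (by linarith), ← rh_mul _ (by nlinarith), fac]
      congr 1; ring
  · intro y hy; simp [wA_zero hy]
  · intro y hy
    rw [rh_of_nonpos (t := -lam x y w), mul_zero]
    rw [fac]
    by_contra h
    apply hy
    constructor <;> by_contra h' <;> nlinarith

lemma step7b {x y : ℝ} (hx : x ∈ Ioo (0:ℝ) 1) (hy : y ∈ Ioo (0:ℝ) 1) :
    ∫⁻ w, rh (w - 4) * rh (lam x y w) = ∫⁻ w, rh (4 - w) * rh (-lam x y w) := by
  have hx0 : 0 < x := hx.1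
  have hy0 : 0 < y := hy.1
  have ha : 0 < √x := by positivity
  have ha1 : √x < 1 := by rw [Real.sqrt_lt' one_pos]; simpa using hx.2
  have hb : 0 < √y := by positivity
  have hb1 : √y < 1 := by rw [Real.sqrt_lt' one_pos]; simpa using hy.2
  have fac := lam_fac hx0.le hy0.le
  set a := √x
  set b := √y
  set m := (b - a)^2 with hm
  set M := (b + a)^2 with hM
  have hmM : m < M := by nlinarith [mul_pos ha hb]
  have hM4 : M < 4 := by nlinarith
  rw [supp (s := Ioi 4) measurableSet_Ioi, supp (s := Ioo m M) measurableSet_Ioo]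
  · have s1 := seg hmM 4 (-1) 1 0 (by linarith) (by linarith)
    have s2 := halfline 4 (-m) 1 (-M) 1 (by linarith) (by linarith)
    rw [show (4 + -1 * m) * (1 + 0 * M) = (-m + 1 * 4) * 1 by ring,
      show (4 + -1 * M) * (1 + 0 * m) = 1 * (-M + 1 * 4) by ring, ← s2] at s1
    symm
    convert s1 using 1
    · apply setLIntegral_congr_fun measurableSet_Ioo
      intro w hw
      have := hw.2
      simp only []
      rw [← rh_mul _ (by linarith), fac]
      congr 1; ring
    · apply setLIntegral_congr_fun measurableSet_Ioi
      intro w hw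
      have hw : 4 < w := hw
      simp only []
      rw [← rh_mul _ (by linarith), fac]
      congr 1; ring
  · intro w hy
    rw [rh_of_nonpos (t := -lam x y w), mul_zero]
    rw [fac]
    by_contra h
    apply hy
    constructor <;> by_contra h' <;> nlinarith
  · intro w hw
    have hw : w ≤ 4 := by simpa using hw
    rw [rh_of_nonpos (by linarith), zero_mul]

lemma step7 : kap = W1 := by
  have h : ∀ x, rh x ≠ ⊤ := by simp [rh]
  have e1 : kap = ∫⁻ w, ∫⁻ x, ∫⁻ y, wA x * wA y * (rh (w - 4) * rh (lam x y w)) := by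
    unfold kap
    congr 1; ext w; congr 1; ext x
    by_cases hw : 4 < w
    · by_cases hx : x ∈ Ioo (0:ℝ) 1
      · have := step7a hx hw
        rw [show ∫⁻ y, wA x * wB y * (rh (w - 4) * rh (-lam x y w)) =
          ∫⁻ y, (wA x * rh (w - 4)) * (wB y * rh (-lam x y w)) by
            congr 1; ext y; ring,
          show ∫⁻ y, wA x * wA y * (rh (w - 4) * rh (lam x y w)) =
          ∫⁻ y, (wA x * rh (w - 4)) * (wA y * rh (lam x y w)) by
            congr 1; ext y; ring,
          lintegral_const_mul' _ _ (ENNReal.mul_ne_top (wA_ne_top x) (h _)), this,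
          lintegral_const_mul' _ _ (ENNReal.mul_ne_top (wA_ne_top x) (h _))]
      · simp [wA_zero hx]
    · simp [rh_of_nonpos (show w - 4 ≤ 0 by linarith)]
  rw [e1, swap_out (by fun_prop), swap_in (by fun_prop)]
  unfold W1
  congr 1; ext x; congr 1; ext y
  by_cases hx : x ∈ Ioo (0:ℝ) 1
  · by_cases hy : y ∈ Ioo (0:ℝ) 1
    · rw [lintegral_const_mul' _ _ (ENNReal.mul_ne_top (wA_ne_top x) (wA_ne_top y)), step7b hx hy,
        lintegral_const_mul' _ _ (ENNReal.mul_ne_top (wA_ne_top x) (wA_ne_top y))]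
    · simp [wA_zero hy]
  · simp [wA_zero hx]

lemma Z1_W1 : Z1 = 2 * W1 := by rw [Z1_eq, step6, step7]
end SW

namespace SW

/-- full period measure -/
noncomputable def per : Measure ℝ := volume.restrict (Ioc (-π) π)

noncomputable instance : SFinite per := by unfold per; infer_instance

lemma per_shift (c : ℝ) {f : ℝ → ENNReal} (hf : ∀ x, f (x + 2 * π) = f x) :
    ∫⁻ x, f (x + c) ∂per = ∫⁻ x, f x ∂per := by
  have hp : Function.Periodic f (2 * π) := hf
  have h1 : ∫⁻ x in Ioc (-π) π, f (x + c) = ∫⁻ x in Ioc (-π + c) (π + c), f x := by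
    rw [cov_inv (s := Ioc (-π) π) (t := Ioc (-π + c) (π + c)) (g := fun x => x + c) (g' := fun _ => 1)
      (k := fun x => x - c) measurableSet_Ioc]
    · simp
    · intro x _; simpa using (hasDerivAt_id x).add_const c
    · rintro x ⟨h1, h2⟩; exact ⟨by linarith, by linarith⟩
    · rintro x ⟨h1, h2⟩; exact ⟨by linarith, by linarith⟩
    · simp
    · simp
  unfold per
  rw [h1]
  have d1 := isAddFundamentalDomain_Ioc (T := 2 * π) (by positivity) (-π + c)
  have d2 := isAddFundamentalDomain_Ioc (T := 2 * π) (by positivity) (-π)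
  rw [show -π + c + 2 * π = π + c by ring] at d1
  rw [show -π + 2 * π = π by ring] at d2
  refine d1.setLIntegral_eq d2 f ?_
  rintro ⟨g, hg⟩ x
  obtain ⟨n, rfl⟩ := AddSubgroup.mem_zmultiples_iff.mp hg
  show f (n • (2 * π) + x) = f x
  rw [add_comm]
  exact hp.zsmul n x

lemma per_even {f : ℝ → ENNReal} (hf : ∀ x, f (-x) = f x) :
    ∫⁻ x, f x ∂per = 2 * ∫⁻ x in Ioo 0 π, f x := by
  unfold per
  rw [← Ioc_union_Ioc_eq_Ioc (show -π ≤ 0 by linarith [pi_pos]) pi_pos.le,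
    lintegral_union measurableSet_Ioc (by
      rw [Set.disjoint_left]; rintro x ⟨_, h⟩ ⟨h', _⟩; linarith), two_mul,
    setLIntegral_congr Ioo_ae_eq_Ioc.symm, setLIntegral_congr (Ioo_ae_eq_Ioc (a := 0) (b := π)).symm]
  congr 1
  rw [cov_inv (s := Ioo 0 π) (t := Ioo (-π) 0) (g := fun x => -x) (g' := fun _ => -1)
      (k := fun x => -x) measurableSet_Ioo]
  · simp [hf]
  · intro x _; exact hasDerivAt_neg x
  · rintro x ⟨h1, h2⟩; exact ⟨by linarith, by linarith⟩
  · rintro x ⟨h1, h2⟩; exact ⟨by linarith, by linarith⟩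
  · simp
  · simp

lemma coscov (f : ℝ → ENNReal) :
    ∫⁻ x in Ioo 0 π, f (cos x) = ∫⁻ u in Ioo (-1) 1, rh (1 - u^2) * f u := by
  rw [cov_inv (s := Ioo 0 π) (t := Ioo (-1) 1) (g := cos) (g' := fun x => -sin x)
      (k := arccos) measurableSet_Ioo]
  · apply setLIntegral_congr_fun measurableSet_Ioo
    intro x hx
    have hs : 0 < sin x := sin_pos_of_pos_of_lt_pi hx.1 hx.2
    simp only [abs_neg, abs_of_pos hs]
    rw [show 1 - cos x^2 = sin x^2 by rw [sin_sq], rh_sq hs.le, ← mul_assoc, ofReal_mul_iv hs.le,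
      div_self hs.ne']; simp
  · intro x _; exact hasDerivAt_cos x
  · rintro x ⟨h1, h2⟩
    constructor
    · rw [← cos_pi]; exact cos_lt_cos_of_nonneg_of_le_pi h1.le le_rfl h2
    · rw [← cos_zero]; exact cos_lt_cos_of_nonneg_of_le_pi le_rfl h2.le h1
  · rintro x ⟨h1, h2⟩
    refine ⟨arccos_pos.mpr h2, ?_⟩
    rcases (arccos_le_pi x).lt_or_eq with h | h
    · exact h
    · rw [arccos_eq_pi] at h; linarith
  · rintro x ⟨h1, h2⟩; exact arccos_cos h1.le h2.le
  · rintro x ⟨h1, h2⟩; exact cos_arccos h1.le h2.le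

lemma affseg {k d p q : ℝ} (hk : 0 < k) (f : ℝ → ENNReal) :
    ∫⁻ y in Ioo (k * p + d) (k * q + d), f y = ENNReal.ofReal k * ∫⁻ x in Ioo p q, f (k * x + d) := by
  rw [cov_inv (s := Ioo p q) (t := Ioo (k * p + d) (k * q + d)) (g := fun x => k * x + d) (g' := fun _ => k)
    (k := fun y => (y - d) / k) measurableSet_Ioo
    (fun x _ => by simpa using ((hasDerivAt_id x).const_mul k).add_const d) _ _
    (fun x _ => by field_simp; ring) (fun x _ => by field_simp; ring) f, lintegral_const_mul' _ _ ENNReal.ofReal_ne_top,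
    abs_of_pos hk]
  · rintro x ⟨h1, h2⟩; exact ⟨by nlinarith, by nlinarith⟩
  · rintro x ⟨h1, h2⟩
    constructor
    · rw [lt_div_iff₀ hk]; linarith
    · rw [div_lt_iff₀ hk]; linarith

lemma two_cos {G : ℝ → ENNReal} (hG : Measurable G) :
    ∫⁻ s, ∫⁻ t, G (cos s + cos t) ∂per ∂per = 2 * ∫⁻ x, wA x * ∫⁻ s, G (2 * √x * cos s) ∂per := by
  have e1 : ∀ s, ∫⁻ t, G (cos s + cos t) ∂per = ∫⁻ t, G (2 * cos (t/2) * cos (s + t/2)) ∂per := by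
    intro s
    rw [← per_shift s (f := fun t => G (cos s + cos t)) (by simp)]
    congr 1; ext t
    congr 1
    have h1 : cos s = cos ((s + t/2) - t/2) := by ring_nf
    have h2 : cos (t + s) = cos ((s + t/2) + t/2) := by ring_nf
    rw [h1, h2, cos_sub, cos_add (s + t/2)]
    ring
  simp_rw [e1]
  rw [swap2 (by fun_prop)]
  have e2 : ∀ t, ∫⁻ s, G (2 * cos (t/2) * cos (s + t/2)) ∂per = ∫⁻ s, G (2 * cos (t/2) * cos s) ∂per := by
    intro t
    exact per_shift (t/2) (f := fun s => G (2 * cos (t/2) * cos s)) (by simp)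
  simp_rw [e2]
  rw [per_even (by intro t; rw [neg_div, cos_neg])]
  congr 1
  have e3 : ∫⁻ t in Ioo 0 π, ∫⁻ s, G (2 * cos (t/2) * cos s) ∂per =
      ∫⁻ t in Ioo 0 π, ∫⁻ s, G (2 * √((1 + cos t)/2) * cos s) ∂per := by
    apply setLIntegral_congr_fun measurableSet_Ioo
    rintro t ⟨h1, h2⟩
    simp only []
    rw [cos_half (by linarith) h2.le]
  rw [e3, coscov (fun u => ∫⁻ s, G (2 * √((1 + u)/2) * cos s) ∂per),
    supp (s := Ioo 0 1) measurableSet_Ioo (fun x hx => by rw [wA_zero hx, zero_mul])]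
  have := affseg (k := 2) (d := -1) (p := 0) (q := 1) (by norm_num)
    (fun u => rh (1 - u ^ 2) * ∫⁻ s, G (2 * √((1 + u)/2) * cos s) ∂per)
  rw [show (2:ℝ)*0 + -1 = -1 by norm_num, show (2:ℝ)*1 + -1 = 1 by norm_num, show ENNReal.ofReal 2 = 2 by simp] at this
  rw [this, ← lintegral_const_mul' _ _ (by simp)]
  apply setLIntegral_congr_fun measurableSet_Ioo
  rintro x ⟨h1, h2⟩
  simp only []
  rw [show 1 - (2 * x + -1)^2 = 2^2 * (x * (1 - x)) by ring, show (1 + (2 * x + -1))/2 = x by ring,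
    rh_mul _ (by norm_num), rh_sq (by norm_num), rh_mul _ h1.le]
  have : (2:ENNReal) * iv 2 = 1 := by
    have := ofReal_mul_iv (a := 2) (b := 2) (by norm_num)
    simpa using this
  rw [← mul_assoc, ← mul_assoc, this, one_mul]; rfl

lemma amp {a b t : ℝ} : ∃ d, ∀ s, a * cos s + b * cos (s + t) = √(a^2 + b^2 + 2*a*b*cos t) * cos (s + d) := by
  set z : ℂ := ⟨a + b * cos t, b * sin t⟩ with hz
  refine ⟨z.arg, fun s => ?_⟩
  have hn : ‖z‖ = √(a^2 + b^2 + 2*a*b*cos t) := by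
    rw [Complex.norm_eq_sqrt_sq_add_sq]
    congr 1
    simp only [hz]
    linear_combination b^2 * (sin_sq_add_cos_sq t)
  have h1 := Complex.norm_mul_cos_arg z
  have h2 := Complex.norm_mul_sin_arg z
  rw [← hn, cos_add, cos_add]
  have h1' : ‖z‖ * cos z.arg = a + b * cos t := h1
  have h2' : ‖z‖ * sin z.arg = b * sin t := h2
  linear_combination -cos s * h1' + sin s * h2'

lemma cos_avg {r : ℝ} (h0 : 0 ≤ r) (hr : r < 4) :
    ∫⁻ s, iv (4 - r * cos s) ∂per = ENNReal.ofReal (2 * π) * rh (16 - r^2) := by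
  rw [per_even (by simp), coscov (fun u => iv (4 - r * u))]
  have := arcsine (p := -1) (q := 1) (by norm_num) 4 (-r) (by linarith) (by linarith)
  rw [show (4 + -r * -1) * (4 + -r * 1) = 16 - r^2 by ring] at this
  rw [ENNReal.ofReal_mul (by norm_num), mul_assoc, ← this]
  simp only [ENNReal.ofReal_ofNat]
  congr 1
  apply setLIntegral_congr_fun measurableSet_Ioo
  intro u _
  simp only []
  congr 2 <;> ring

lemma step8_fiber {x y : ℝ} (hx : x ∈ Ioo (0:ℝ) 1) (hy : y ∈ Ioo (0:ℝ) 1) :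
    ∫⁻ s, ∫⁻ t, iv (4 - (2 * √x * cos s + 2 * √y * cos t)) ∂per ∂per
      = ENNReal.ofReal (2 * π) * ∫⁻ w, rh (4 - w) * rh (-lam x y w) := by
  have hx0 : 0 < x := hx.1
  have hy0 : 0 < y := hy.1
  have ha : 0 < √x := by positivity
  have ha1 : √x < 1 := by rw [Real.sqrt_lt' one_pos]; simpa using hx.2
  have hb : 0 < √y := by positivity
  have hb1 : √y < 1 := by rw [Real.sqrt_lt' one_pos]; simpa using hy.2
  have hxa : x = √x^2 := (Real.sq_sqrt hx0.le).symm
  have hyb : y = √y^2 := (Real.sq_sqrt hy0.le).symm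
  have fac := lam_fac hx0.le hy0.le
  set a := √x
  set b := √y
  have e1 : ∀ s, ∫⁻ t, iv (4 - (2 * a * cos s + 2 * b * cos t)) ∂per =
      ∫⁻ t, iv (4 - (2 * a * cos s + 2 * b * cos (s + t))) ∂per := by
    intro s
    rw [← per_shift s (f := fun t => iv (4 - (2 * a * cos s + 2 * b * cos t))) (by simp)]
    congr 1; ext t; rw [add_comm t s]
  simp_rw [e1]
  rw [swap2 (by fun_prop)]
  have e2 : ∀ t, ∫⁻ s, iv (4 - (2 * a * cos s + 2 * b * cos (s + t))) ∂per =
      ENNReal.ofReal π * rh (4 - (2 * a * b * cos t + (a^2+b^2))) := by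
    intro t
    obtain ⟨d, hd⟩ := amp (a := 2 * a) (b := 2 * b) (t := t)
    simp_rw [hd]
    rw [per_shift d (f := fun s => iv (4 - √((2 * a)^2 + (2 * b)^2 + 2*(2 * a)*(2 * b)*cos t) * cos s)) (by simp)]
    have hc := cos_le_one t
    have hc' := neg_one_le_cos t
    have hab := mul_pos ha hb
    have hnn : 0 ≤ (2 * a)^2 + (2 * b)^2 + 2*(2 * a)*(2 * b)*cos t := by
      nlinarith [sq_nonneg (a - b)]
    rw [cos_avg (by positivity), Real.sq_sqrt hnn,
      show 16 - ((2 * a)^2 + (2 * b)^2 + 2*(2 * a)*(2 * b)*cos t) = 2^2 * (4 - (2 * a * b * cos t + (a^2+b^2))) by ring,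
      rh_mul _ (by norm_num), rh_sq (by norm_num), ← mul_assoc, ofReal_mul_iv (by positivity)]
    · congr 2; ring
    · rw [Real.sqrt_lt' (by norm_num)]
      nlinarith
  simp_rw [e2]
  rw [lintegral_const_mul' _ _ ENNReal.ofReal_ne_top, per_even (by simp),
    coscov (fun u => rh (4 - (2 * a * b * u + (a^2+b^2)))), ← mul_assoc,
    show ENNReal.ofReal (2 * π) = ENNReal.ofReal π * 2 by rw [ENNReal.ofReal_mul (by norm_num)]; simp [mul_comm]]
  congr 1
  rw [supp (s := Ioo ((2 * a * b) * (-1) + (a^2+b^2)) ((2 * a * b) * 1 + (a^2+b^2))) measurableSet_Ioo,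
    affseg (by positivity), ← lintegral_const_mul' _ _ ENNReal.ofReal_ne_top]
  · apply setLIntegral_congr_fun measurableSet_Ioo
    rintro u ⟨h1, h2⟩
    simp only []
    rw [fac, show -((2 * a * b * u + (a^2 + b^2) - (b - a)^2) * (2 * a * b * u + (a^2 + b^2) - (b + a)^2))
      = (2 * a * b)^2 * (1 - u^2) by ring, rh_mul _ (by positivity), rh_sq (by positivity),
      show ∀ A B C D : ENNReal, A * (B * (C * D)) = (A * C) * (D * B) by intros; ring,
      ofReal_mul_iv (by positivity), div_self (by positivity)]
    simp
  · intro w hy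
    rw [rh_of_nonpos (t := -lam x y w), mul_zero]
    rw [fac]
    by_contra h
    apply hy
    have hab := mul_pos ha hb
    constructor <;> by_contra h' <;> nlinarith

lemma step8 : ∫⁻ p1, ∫⁻ p2, ∫⁻ p3, ∫⁻ p4, iv (4 - (cos p1 + cos p2 + (cos p3 + cos p4))) ∂per ∂per ∂per ∂per
    = ENNReal.ofReal (8 * π) * W1 := by
  have e1 : ∀ c, ∫⁻ p3, ∫⁻ p4, iv (4 - (c + (cos p3 + cos p4))) ∂per ∂per =
      2 * ∫⁻ y, wA y * ∫⁻ t, iv (4 - (c + 2 * √y * cos t)) ∂per := by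
    intro c
    exact two_cos (G := fun u => iv (4 - (c + u))) (by fun_prop)
  simp_rw [e1]
  have m1 : Measurable fun u : ℝ => 2 * ∫⁻ y, wA y * ∫⁻ t, iv (4 - (u + 2 * √y * cos t)) ∂per := by
    apply Measurable.const_mul
    apply meas_int (f := fun u y => wA y * ∫⁻ t, iv (4 - (u + 2 * √y * cos t)) ∂per)
    apply Measurable.mul (by fun_prop)
    apply meas_int (f := fun (p : ℝ × ℝ) t => iv (4 - (p.1 + 2 * √p.2 * cos t)))
    fun_prop
  rw [two_cos (G := fun u => 2 * ∫⁻ y, wA y * ∫⁻ t, iv (4 - (u + 2 * √y * cos t)) ∂per) m1]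
  unfold W1
  rw [show ENNReal.ofReal (8 * π) = 2 * (2 * ENNReal.ofReal (2 * π)) by
    rw [show 8 * π = 2 * (2 * (2 * π)) by ring, ENNReal.ofReal_mul (by norm_num), ENNReal.ofReal_mul (by norm_num)]; simp,
    mul_assoc]
  congr 1
  rw [← lintegral_const_mul' _ _ (by finiteness)]
  congr 1; ext x
  by_cases hx : x ∈ Ioo (0:ℝ) 1
  swap
  · simp [wA_zero hx]
  rw [lintegral_const_mul' _ _ (by simp), ← mul_assoc, mul_comm (wA x) 2, mul_assoc, mul_assoc]
  congr 1
  rw [swap2]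
  · rw [← lintegral_const_mul' _ _ (wA_ne_top x), ← lintegral_const_mul' _ _ (by finiteness)]
    congr 1; ext y
    by_cases hy : y ∈ Ioo (0:ℝ) 1
    swap
    · simp [wA_zero hy]
    rw [lintegral_const_mul' _ _ (wA_ne_top y), step8_fiber hx hy, lintegral_const_mul' _ _ (ENNReal.mul_ne_top (wA_ne_top x) (wA_ne_top y))]
    ring
  · apply Measurable.mul (by fun_prop)
    apply meas_int (f := fun (p : ℝ × ℝ) t => iv (4 - (2 * √x * cos p.1 + 2 * √p.2 * cos t)))
    fun_prop
end SW

namespace SW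

lemma conv1 {s : Set ℝ} (hs : MeasurableSet s) {H : ℝ → ENNReal} {h : ℝ → ℝ} (mH : Measurable H)
    (fin : ∫⁻ x in s, H x ≠ ⊤) (hh : ∀ x ∈ s, H x ≠ ⊤ → h x = (H x).toReal) :
    ∫ x in s, h x = (∫⁻ x in s, H x).toReal := by
  have h1 := ae_lt_top mH fin
  rw [← integral_toReal mH.aemeasurable h1]
  apply integral_congr_ae
  filter_upwards [h1, ae_restrict_mem hs] with x hx hm
  exact hh x hm hx.ne

lemma conv4 {s : Set ℝ} (hs : MeasurableSet s) {f : ℝ → ℝ → ℝ → ℝ → ℝ}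
    (mf : Measurable fun p : ((ℝ × ℝ) × ℝ) × ℝ => f p.1.1.1 p.1.1.2 p.1.2 p.2)
    (pos : ∀ x ∈ s, ∀ y ∈ s, ∀ z ∈ s, ∀ w ∈ s, 0 ≤ f x y z w)
    (fin : ∫⁻ x in s, ∫⁻ y in s, ∫⁻ z in s, ∫⁻ w in s, ENNReal.ofReal (f x y z w) ≠ ⊤) :
    ∫ x in s, ∫ y in s, ∫ z in s, ∫ w in s, f x y z w =
      (∫⁻ x in s, ∫⁻ y in s, ∫⁻ z in s, ∫⁻ w in s, ENNReal.ofReal (f x y z w)).toReal := by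
  have m1 : Measurable fun p : (ℝ × ℝ) × ℝ => ∫⁻ w in s, ENNReal.ofReal (f p.1.1 p.1.2 p.2 w) :=
    meas_int (f := fun (p : (ℝ × ℝ) × ℝ) w => ENNReal.ofReal (f p.1.1 p.1.2 p.2 w)) mf.ennreal_ofReal
  have m2 : Measurable fun p : ℝ × ℝ => ∫⁻ z in s, ∫⁻ w in s, ENNReal.ofReal (f p.1 p.2 z w) :=
    meas_int (f := fun (p : ℝ × ℝ) z => ∫⁻ w in s, ENNReal.ofReal (f p.1 p.2 z w)) m1
  have m3 : Measurable fun x : ℝ => ∫⁻ y in s, ∫⁻ z in s, ∫⁻ w in s, ENNReal.ofReal (f x y z w) :=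
    meas_int (f := fun (x : ℝ) y => ∫⁻ z in s, ∫⁻ w in s, ENNReal.ofReal (f x y z w)) m2
  refine conv1 hs m3 fin fun x hx fx => ?_
  refine conv1 hs (m2.comp (by fun_prop : Measurable fun y : ℝ => (x, y))) fx fun y hy fy => ?_
  refine conv1 hs (m1.comp (by fun_prop : Measurable fun z : ℝ => ((x, y), z))) fy fun z hz fz => ?_
  refine conv1 hs (mf.comp (by fun_prop : Measurable fun w : ℝ => (((x, y), z), w))).ennreal_ofReal fz
    fun w hw _ => ?_
  exact (ENNReal.toReal_ofReal (pos x hx y hy z hz w hw)).symm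

/-- Watson integral -/
noncomputable def RL : ENNReal := ∫⁻ p1 in Ioo 0 π, ∫⁻ p2 in Ioo 0 π, ∫⁻ p3 in Ioo 0 π, ∫⁻ p4 in Ioo 0 π,
  iv (4 - (cos p1 + cos p2 + (cos p3 + cos p4)))

lemma RL_eq : 16 * RL = ENNReal.ofReal (8 * π) * W1 := by
  rw [← step8]
  have e4 : ∀ p1 p2 p3 : ℝ, ∫⁻ p4, iv (4 - (cos p1 + cos p2 + (cos p3 + cos p4))) ∂per
     = 2 * ∫⁻ p4 in Ioo 0 π, iv (4 - (cos p1 + cos p2 + (cos p3 + cos p4))) := by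
    intro p1 p2 p3; exact per_even (f := fun p4 => iv (4 - (cos p1 + cos p2 + (cos p3 + cos p4)))) (fun x => by rw [cos_neg])
  simp_rw [e4]
  have e3 : ∀ p1 p2 : ℝ, ∫⁻ p3, (2 * ∫⁻ p4 in Ioo 0 π, iv (4 - (cos p1 + cos p2 + (cos p3 + cos p4)))) ∂per
     = 2 * ∫⁻ p3 in Ioo 0 π, 2 * ∫⁻ p4 in Ioo 0 π, iv (4 - (cos p1 + cos p2 + (cos p3 + cos p4))) := by
    intro p1 p2; exact per_even (by simp)
  simp_rw [e3]
  have e2 : ∀ p1 : ℝ, ∫⁻ p2, (2 * ∫⁻ p3 in Ioo 0 π, 2 * ∫⁻ p4 in Ioo 0 π, iv (4 - (cos p1 + cos p2 + (cos p3 + cos p4)))) ∂per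
     = 2 * ∫⁻ p2 in Ioo 0 π, 2 * ∫⁻ p3 in Ioo 0 π, 2 * ∫⁻ p4 in Ioo 0 π, iv (4 - (cos p1 + cos p2 + (cos p3 + cos p4))) := by
    intro p1; exact per_even (by simp)
  simp_rw [e2]
  rw [per_even (by simp)]
  have h2 : (2:ENNReal) ≠ ⊤ := by simp
  simp_rw [lintegral_const_mul' _ _ h2]
  unfold RL
  rw [show (16:ENNReal) = 2 * 2 * 2 * 2 by norm_num]
  ring

lemma rh_int : ∫⁻ x in Ioo 0 π, rh x ≠ ⊤ := by
  have h : IntervalIntegrable (fun x : ℝ => x ^ (-(1/2) : ℝ)) volume 0 π :=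
    intervalIntegral.intervalIntegrable_rpow' (by norm_num)
  rw [intervalIntegrable_iff_integrableOn_Ioo_of_le pi_pos.le] at h
  have h3 := h.lintegral_lt_top
  refine ne_of_lt (lt_of_le_of_lt ?_ h3)
  apply setLIntegral_mono' measurableSet_Ioo
  rintro x ⟨h1, _⟩
  unfold rh
  rw [rpow_neg h1.le, sqrt_eq_rpow]

lemma RL_fin : RL ≠ ⊤ := by
  have bound : ∀ a ∈ Ioo 0 π, ∀ b ∈ Ioo 0 π, ∀ c ∈ Ioo 0 π, ∀ d ∈ Ioo 0 π,
      iv (4 - (cos a + cos b + (cos c + cos d))) ≤ ENNReal.ofReal (π^2/8) * (rh a * (rh b * (rh c * rh d))) := by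
    intro a ha b hb c hc d hd
    have q : ∀ x ∈ Ioo 0 π, cos x ≤ 1 - 2 / π^2 * x^2 := fun x hx =>
      cos_le_one_sub_mul_cos_sq (by rw [abs_of_pos hx.1]; exact hx.2.le)
    have qa := q a ha
    have qb := q b hb
    have qc := q c hc
    have qd := q d hd
    obtain ⟨a0, -⟩ := ha
    obtain ⟨b0, -⟩ := hb
    obtain ⟨c0, -⟩ := hc
    obtain ⟨d0, -⟩ := hd
    have am : 4 * (√a * (√b * (√c * √d))) ≤ a^2 + b^2 + c^2 + d^2 := by
      have ea := sq_sqrt a0.le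
      have eb := sq_sqrt b0.le
      have ec := sq_sqrt c0.le
      have ed := sq_sqrt d0.le
      nlinarith [sq_nonneg (a - b), sq_nonneg (c - d), sq_nonneg (√a*√b - √c*√d)]
    have hpos : 0 < √a * (√b * (√c * √d)) := by positivity
    unfold iv rh
    rw [← ENNReal.ofReal_mul (by positivity), ← ENNReal.ofReal_mul (by positivity), ← ENNReal.ofReal_mul (by positivity),
      ← ENNReal.ofReal_mul (by positivity)]
    apply ENNReal.ofReal_le_ofReal
    have key : 8 / π^2 * (√a * (√b * (√c * √d))) ≤ 4 - (cos a + cos b + (cos c + cos d)) := by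
      have : 2 / π^2 * (4 * (√a * (√b * (√c * √d)))) ≤ 2 / π^2 * (a^2 + b^2 + c^2 + d^2) := by gcongr
      linear_combination this + qa + qb + qc + qd
    calc _ ≤ (8 / π^2 * (√a * (√b * (√c * √d))))⁻¹ := by
          gcongr
      _ = _ := by rw [mul_inv, mul_inv, mul_inv, mul_inv, inv_div]
  unfold RL
  have : ∫⁻ a in Ioo 0 π, ∫⁻ b in Ioo 0 π, ∫⁻ c in Ioo 0 π, ∫⁻ d in Ioo 0 π,
      ENNReal.ofReal (π^2/8) * (rh a * (rh b * (rh c * rh d))) ≠ ⊤ := by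
    simp_rw [lintegral_const_mul' _ _ ENNReal.ofReal_ne_top]
    have hr : ∀ t, rh t ≠ ⊤ := fun t => ENNReal.ofReal_ne_top
    have m : Measurable rh := by fun_prop
    simp_rw [lintegral_const_mul' _ _ (hr _), lintegral_mul_const _ m]
    have := rh_int
    finiteness
  refine ne_top_of_le_ne_top this ?_
  apply setLIntegral_mono' measurableSet_Ioo
  intro a ha
  apply setLIntegral_mono' measurableSet_Ioo
  intro b hb
  apply setLIntegral_mono' measurableSet_Ioo
  intro c hc
  apply setLIntegral_mono' measurableSet_Ioo
  intro d hd
  exact bound a ha b hb c hc d hd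

lemma watson_conv : ∫ p1 in (0:ℝ)..π, ∫ p2 in (0:ℝ)..π, ∫ p3 in (0:ℝ)..π, ∫ p4 in (0:ℝ)..π,
        1 / (4 - cos p1 - cos p2 - cos p3 - cos p4) = RL.toReal := by
  simp_rw [intervalIntegral.integral_of_le pi_pos.le, integral_Ioc_eq_integral_Ioo]
  have e : RL = ∫⁻ x in Ioo 0 π, ∫⁻ y in Ioo 0 π, ∫⁻ z in Ioo 0 π, ∫⁻ w in Ioo 0 π,
      ENNReal.ofReal (1 / (4 - cos x - cos y - cos z - cos w)) := by
    unfold RL iv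
    simp only [one_div, ← sub_sub]
  rw [e]
  refine conv4 (f := fun x y z w => 1 / (4 - cos x - cos y - cos z - cos w)) measurableSet_Ioo (by fun_prop) ?_ ?_
  · intro x _ y _ z _ w _
    have := cos_le_one x
    have := cos_le_one y
    have := cos_le_one z
    have := cos_le_one w
    exact one_div_nonneg.mpr (by linarith)
  · rw [← e]; exact RL_fin
end SW

namespace SW

/-- half line measure -/
noncomputable abbrev hl : Measure ℝ := volume.restrict (Ioi 0)

lemma push3 {μ : Measure ℝ} [SFinite μ] {F : ℝ → ℝ → ℝ → ENNReal}
    (m : Measurable fun p : ℝ × ℝ × ℝ => F p.1 p.2.1 p.2.2) :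
    ∫⁻ x, ∫⁻ a, ∫⁻ b, F x a b ∂μ ∂μ ∂μ = ∫⁻ a, ∫⁻ b, ∫⁻ x, F x a b ∂μ ∂μ ∂μ := by
  rw [swap_out m]
  exact swap_in (f := fun a x b => F x a b)
    (m.comp (by fun_prop : Measurable fun p : ℝ × ℝ × ℝ => (p.2.1, p.1, p.2.2)))

lemma push4 {μ : Measure ℝ} [SFinite μ] {F : ℝ → ℝ → ℝ → ℝ → ENNReal}
    (m : Measurable fun p : ℝ × ℝ × ℝ × ℝ => F p.1 p.2.1 p.2.2.1 p.2.2.2) :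
    ∫⁻ x, ∫⁻ a, ∫⁻ b, ∫⁻ c, F x a b c ∂μ ∂μ ∂μ ∂μ = ∫⁻ a, ∫⁻ b, ∫⁻ c, ∫⁻ x, F x a b c ∂μ ∂μ ∂μ ∂μ := by
  rw [swap2]
  · congr 1; ext a
    exact push3 (F := fun x b c => F x a b c)
      (m.comp (by fun_prop : Measurable fun p : ℝ × ℝ × ℝ => (p.1, a, p.2.1, p.2.2)))
  · apply meas_int (f := fun (p : ℝ × ℝ) b => ∫⁻ c, F p.1 p.2 b c ∂μ)
    apply meas_int (f := fun (p : (ℝ × ℝ) × ℝ) c => F p.1.1 p.1.2 p.2 c)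
    exact m.comp (by fun_prop : Measurable fun p : ((ℝ × ℝ) × ℝ) × ℝ => (p.1.1.1, p.1.1.2, p.1.2, p.2))

lemma vmap (f : ℝ → ENNReal) :
    ∫⁻ V in Ioi 0, wN V * f V = ∫⁻ z in Ioi 0, iv (1 + z) * f (z^2 / (4 * (1 + z))) := by
  rw [cov_half (g := fun z => z^2 / (4 * (1 + z))) (g' := fun z => z * (z + 2) / (4 * (1 + z)^2)) ?_ (by simp) ?_ (1/4) (1/4) (by norm_num)]
  · apply setLIntegral_congr_fun measurableSet_Ioi
    intro z hz
    have hz : 0 < z := hz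
    simp only []
    rw [← mul_assoc]; congr 1
    unfold wN
    rw [← rh_mul _ (by positivity), show z^2 / (4 * (1 + z)) * (1 + z^2 / (4 * (1 + z))) = (z * (z + 2) / (4 * (1 + z)))^2 by
      field_simp; ring, rh_sq (by positivity), ofReal_mul_iv (by positivity)]
    unfold iv
    congr 1
    field_simp
  · intro x hx
    rw [ge_iff_le.symm, ge_iff_le, le_div_iff₀ (by positivity)]
    nlinarith
  · intro x hx
    have h1 : HasDerivAt (fun z : ℝ => z^2) (2 * x) x := by simpa using hasDerivAt_pow 2 x
    have h2 : HasDerivAt (fun z : ℝ => 4 * (1 + z)) 4 x := by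
      simpa using ((hasDerivAt_id x).const_add 1).const_mul 4
    refine (h1.div h2 (by positivity)).congr_deriv ?_
    field_simp
    ring
  · intro x hx; positivity

lemma pfold (f : ℝ → ENNReal) :
    ∫⁻ p in Ioi 0, iv p * f ((1 + p)^2 / (4 * p)) = 2 * ∫⁻ U in Ioi 0, wN U * f (1 + U) := by
  rw [vmap (fun U => f (1 + U))]
  have h1 : ∫⁻ p in Ioi 1, iv p * f ((1 + p)^2 / (4 * p)) = ∫⁻ z in Ioi 0, iv (1 + z) * f (1 + z^2 / (4 * (1 + z))) := by
    rw [cov_inv (s := Ioi 0) (t := Ioi 1) (g := fun z => 1 + z) (g' := fun _ => 1) (k := fun y => y - 1) measurableSet_Ioi]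
    · apply setLIntegral_congr_fun measurableSet_Ioi
      intro z hz
      have hz : 0 < z := hz
      simp only []
      rw [show (1 + (1 + z))^2 / (4 * (1 + z)) = 1 + z^2 / (4 * (1 + z)) by field_simp; ring]
      simp
    · intro x _; simpa using (hasDerivAt_id x).const_add 1
    · intro x hx; simpa using hx
    · intro x hx; simpa using hx
    · simp
    · simp
  have h2 : ∫⁻ p in Ioo 0 1, iv p * f ((1 + p)^2 / (4 * p)) = ∫⁻ p in Ioi 1, iv p * f ((1 + p)^2 / (4 * p)) := by
    rw [cov_inv (s := Ioi 1) (t := Ioo 0 1) (g := fun z => z⁻¹) (g' := fun z => -(z^2)⁻¹) (k := fun y => y⁻¹) measurableSet_Ioi]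
    · apply setLIntegral_congr_fun measurableSet_Ioi
      intro z hz
      have hz : 1 < z := hz
      have hz0 : 0 < z := by linarith
      simp only []
      rw [← mul_assoc, ofReal_mul_iv (by positivity)]
      congr 1
      · unfold iv; congr 1; rw [abs_neg, abs_of_pos (by positivity)]; field_simp
      · congr 1; field_simp; ring
    · intro x hx
      have hx : 1 < x := hx
      exact hasDerivAt_inv (by positivity)
    · intro x hx
      have hx : 1 < x := hx
      exact ⟨by positivity, inv_lt_one_of_one_lt₀ hx⟩
    · rintro y ⟨h1, h2⟩
      exact (one_lt_inv₀ h1).mpr h2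
    · simp
    · simp
  have hu : Ioi (0:ℝ) = Ioc 0 1 ∪ Ioi 1 := (Ioc_union_Ioi_eq_Ioi zero_le_one).symm
  rw [hu, lintegral_union measurableSet_Ioi (by
    rw [Set.disjoint_left]; rintro x ⟨_, h⟩ h'; exact absurd h' (not_lt.mpr h)), ← hu,
    ← setLIntegral_congr Ioo_ae_eq_Ioc, h2, h1, two_mul]

/-- one loop integral -/
noncomputable def TT (V H K : ℝ) : ENNReal := ∫⁻ s in Ioi 0, iv (s^2 + s * (V + H + K) + H * K)

/-- sunrise -/
noncomputable def SL : ENNReal := ∫⁻ x1 in Ioi 0, ∫⁻ x2 in Ioi 0, ∫⁻ x3 in Ioi 0, ∫⁻ x4 in Ioi 0,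
  ENNReal.ofReal (1 / (x1 * x2 * x3 * x4 *
        ((1 + (x1 + x2 + x3 + x4)) * (1 + (1/x1 + 1/x2 + 1/x3 + 1/x4)) - 1)))

lemma SL_1 : SL = ∫⁻ a, ∫⁻ b, ∫⁻ c, ∫⁻ x, iv (a * b * c) * iv ((1 + (a + b + c)) * x^2 +
     (1 + (a + b + c)) * (1 + (1/a + 1/b + 1/c)) * x + (1 + (1/a + 1/b + 1/c))) ∂hl ∂hl ∂hl ∂hl := by
  have m : Measurable fun p : ℝ × ℝ × ℝ × ℝ => iv (p.2.1 * p.2.2.1 * p.2.2.2) * iv ((1 + (p.2.1 + p.2.2.1 + p.2.2.2)) * p.1^2 +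
     (1 + (p.2.1 + p.2.2.1 + p.2.2.2)) * (1 + (1/p.2.1 + 1/p.2.2.1 + 1/p.2.2.2)) * p.1 + (1 + (1/p.2.1 + 1/p.2.2.1 + 1/p.2.2.2))) := by fun_prop
  rw [← push4 m]
  unfold SL
  apply setLIntegral_congr_fun measurableSet_Ioi
  intro x hx
  have hx : 0 < x := hx
  simp only []
  rw [scale hx, ← lintegral_const_mul' _ _ (by finiteness)]
  apply setLIntegral_congr_fun measurableSet_Ioi
  intro a ha
  have ha : 0 < a := ha
  simp only []
  rw [scale hx, ← lintegral_const_mul' _ _ (by finiteness), ← lintegral_const_mul' _ _ (by finiteness)]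
  apply setLIntegral_congr_fun measurableSet_Ioi
  intro b hb
  have hb : 0 < b := hb
  simp only []
  rw [scale hx, ← lintegral_const_mul' _ _ (by finiteness), ← lintegral_const_mul' _ _ (by finiteness), ← lintegral_const_mul' _ _ (by finiteness)]
  apply setLIntegral_congr_fun measurableSet_Ioi
  intro c hc
  have hc : 0 < c := hc
  simp only []
  rw [← ENNReal.ofReal_mul (by positivity), ← ENNReal.ofReal_mul (by positivity), ← ENNReal.ofReal_mul (by positivity),
    ← iv_mul _ (by positivity)]
  unfold iv
  congr 1
  have e : x * (x * a) * (x * b) * (x * c) * ((1 + (x + x * a + x * b + x * c)) * (1 + (1/x + 1/(x * a) + 1/(x * b) + 1/(x * c))) - 1)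
     = x^3 * (a * b * c * ((1 + (a + b + c)) * x^2 +
     (1 + (a + b + c)) * (1 + (1/a + 1/b + 1/c)) * x + (1 + (1/a + 1/b + 1/c)))) := by
    field_simp; ring
  rw [e, one_div, mul_inv (x^3)]
  field_simp

lemma xfib {X Y : ℝ} (hX : 0 < X) (hY : 0 < Y) : ∫⁻ x in Ioi 0, iv (X * x^2 + X * Y * x + Y) =
    ∫⁻ V in Ioi 0, wN V * iv (X * Y + 4 * V) := by
  rw [vmap (fun V => iv (X * Y + 4 * V)), scale (inv_pos.mpr hX), ← lintegral_const_mul' _ _ (by finiteness)]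
  apply setLIntegral_congr_fun measurableSet_Ioi
  intro z hz
  have hz : 0 < z := hz
  simp only []
  rw [ofReal_mul_iv (by positivity), ← iv_mul _ (by positivity)]
  unfold iv
  congr 1
  field_simp
  ring

lemma ifib {V p r : ℝ} (hV : 0 < V) (hp : 0 < p) (hr : 0 < r) :
    ∫⁻ b in Ioi 0, iv b * iv ((1 + (p + b + b * r)) * (1 + (1/p + 1/b + 1/(b * r))) + 4 * V) =
      ENNReal.ofReal (1/4) * TT V ((1 + p)^2 / (4 * p)) ((1 + r)^2 / (4 * r)) := by
  unfold TT
  rw [scale (k := 4 * p / ((1 + p) * (1 + r))) (by positivity), ← lintegral_const_mul' _ _ (by finiteness), ← lintegral_const_mul' _ _ (by finiteness)]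
  apply setLIntegral_congr_fun measurableSet_Ioi
  intro z hz
  have hz : 0 < z := hz
  simp only []
  rw [ofReal_mul_iv (by positivity), ← iv_mul _ (by positivity), ofReal_mul_iv (by positivity)]
  congr 1
  have e : 4 * (z ^ 2 + z * (V + (1 + p) ^ 2 / (4 * p) + (1 + r) ^ 2 / (4 * r)) + (1 + p) ^ 2 / (4 * p) * ((1 + r) ^ 2 / (4 * r)))
    = z * ((1 + (p + 4 * p / ((1 + p) * (1 + r)) * z + 4 * p / ((1 + p) * (1 + r)) * z * r)) * (1 + (1/p + 1/(4 * p / ((1 + p) * (1 + r)) * z) + 1/(4 * p / ((1 + p) * (1 + r)) * z * r))) + 4 * V) := by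
    field_simp; ring
  rw [div_div (1:ℝ) 4, e]
  have : 0 < (1 + (p + 4 * p / ((1 + p) * (1 + r)) * z + 4 * p / ((1 + p) * (1 + r)) * z * r)) * (1 + (1/p + 1/(4 * p / ((1 + p) * (1 + r)) * z) + 1/(4 * p / ((1 + p) * (1 + r)) * z * r))) + 4 * V := by positivity
  generalize ((1 + (p + 4 * p / ((1 + p) * (1 + r)) * z + 4 * p / ((1 + p) * (1 + r)) * z * r)) * (1 + (1/p + 1/(4 * p / ((1 + p) * (1 + r)) * z) + 1/(4 * p / ((1 + p) * (1 + r)) * z * r))) + 4 * V) = D at *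
  field_simp

lemma TT_meas {α : Type*} [MeasurableSpace α] {f g h : α → ℝ} (hf : Measurable f) (hg : Measurable g) (hh : Measurable h) :
    Measurable fun a => TT (f a) (g a) (h a) := by
  unfold TT
  apply meas_int (f := fun a s => iv (s^2 + s * (f a + g a + h a) + g a * h a))
  fun_prop

lemma SL_2 : SL = ∫⁻ V, wN V * ∫⁻ U, wN U * ∫⁻ W, wN W * TT V (1 + U) (1 + W) ∂hl ∂hl ∂hl := by
  have e1 : SL = ∫⁻ a, ∫⁻ b, ∫⁻ c, ∫⁻ V, wN V * (iv (a * b * c) * iv ((1 + (a + b + c)) * (1 + (1/a + 1/b + 1/c)) + 4 * V)) ∂hl ∂hl ∂hl ∂hl := by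
    rw [SL_1]
    apply setLIntegral_congr_fun measurableSet_Ioi
    intro a ha
    have ha : 0 < a := ha
    apply setLIntegral_congr_fun measurableSet_Ioi
    intro b hb
    have hb : 0 < b := hb
    apply setLIntegral_congr_fun measurableSet_Ioi
    intro c hc
    have hc : 0 < c := hc
    have hiv : iv (a * b * c) ≠ ⊤ := ENNReal.ofReal_ne_top
    simp only []
    rw [lintegral_const_mul' _ _ hiv, xfib (by positivity) (by positivity), ← lintegral_const_mul' _ _ hiv]
    congr 1; ext V; ring
  have m : Measurable fun p : ℝ × ℝ × ℝ × ℝ => wN p.1 * (iv (p.2.1 * p.2.2.1 * p.2.2.2) * iv ((1 + (p.2.1 + p.2.2.1 + p.2.2.2)) * (1 + (1/p.2.1 + 1/p.2.2.1 + 1/p.2.2.2)) + 4 * p.1)) := by fun_prop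
  rw [e1, ← push4 m]
  apply setLIntegral_congr_fun measurableSet_Ioi
  intro V hV
  have hV : 0 < V := hV
  simp only []
  have hw := wN_ne_top
  have hq : ∀ t, iv t ≠ ⊤ := fun t => ENNReal.ofReal_ne_top
  simp_rw [lintegral_const_mul' _ _ (hw V)]
  congr 1
  have e2 : ∀ p ∈ Ioi (0:ℝ), ∫⁻ b, ∫⁻ c, iv (p * b * c) * iv ((1 + (p + b + c)) * (1 + (1/p + 1/b + 1/c)) + 4 * V) ∂hl ∂hl
      = iv p * ∫⁻ W, wN W * (ENNReal.ofReal (1/2) * TT V ((1 + p)^2 / (4 * p)) (1 + W)) ∂hl := by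
    intro p hp
    have hp : 0 < p := hp
    have e3 : ∀ b ∈ Ioi (0:ℝ), ∫⁻ c, iv (p * b * c) * iv ((1 + (p + b + c)) * (1 + (1/p + 1/b + 1/c)) + 4 * V) ∂hl
       = ∫⁻ r, iv p * iv r * (iv b * iv ((1 + (p + b + b * r)) * (1 + (1/p + 1/b + 1/(b * r))) + 4 * V)) ∂hl := by
      intro b hb
      have hb : 0 < b := hb
      rw [scale hb, ← lintegral_const_mul' _ _ (by finiteness)]
      apply setLIntegral_congr_fun measurableSet_Ioi
      intro r hr
      have hr : 0 < r := hr
      simp only []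
      rw [← mul_assoc (ENNReal.ofReal b), ← mul_assoc (iv p * iv r)]
      congr 1
      rw [ofReal_mul_iv hb.le, ← iv_mul _ hp.le, ← iv_mul _ (by positivity)]
      unfold iv
      congr 1
      field_simp
    rw [setLIntegral_congr_fun measurableSet_Ioi e3, swap2 (by fun_prop)]
    have e4 : ∀ r ∈ Ioi (0:ℝ), ∫⁻ b, iv p * iv r * (iv b * iv ((1 + (p + b + b * r)) * (1 + (1/p + 1/b + 1/(b * r))) + 4 * V)) ∂hl
        = iv p * (iv r * (ENNReal.ofReal (1/4) * TT V ((1 + p)^2 / (4 * p)) ((1 + r)^2 / (4 * r)))) := by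
      intro r hr
      rw [lintegral_const_mul' _ _ (ENNReal.mul_ne_top (hq _) (hq _)), ifib hV hp hr, mul_assoc]
    rw [setLIntegral_congr_fun measurableSet_Ioi e4, lintegral_const_mul' _ _ (hq _),
      pfold (fun u => ENNReal.ofReal (1/4) * TT V ((1 + p)^2 / (4 * p)) u), ← lintegral_const_mul' _ _ (by simp)]
    congr 2; ext W
    rw [show (2:ENNReal) = ENNReal.ofReal 2 by simp]
    rw [show ∀ A B C D : ENNReal, A * (B * (C * D)) = B * (A * C * D) by intros; ring, ← ENNReal.ofReal_mul (by norm_num)]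
    norm_num
  rw [setLIntegral_congr_fun measurableSet_Ioi e2, pfold (fun h => ∫⁻ W, wN W * (ENNReal.ofReal (1/2) * TT V h (1 + W)) ∂hl),
    ← lintegral_const_mul' _ _ (by simp)]
  congr 1; ext U
  rw [← mul_assoc, mul_comm 2, mul_assoc, ← lintegral_const_mul' _ _ (by simp)]
  congr 2; ext W
  rw [show (2:ENNReal) = ENNReal.ofReal 2 by simp]
  rw [show ∀ A B C D : ENNReal, A * (B * (C * D)) = B * (A * C * D) by intros; ring, ← ENNReal.ofReal_mul (by norm_num)]
  norm_num
end SW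

namespace SW

lemma rh_ne_top (t : ℝ) : rh t ≠ ⊤ := ENNReal.ofReal_ne_top
lemma iv_ne_top (t : ℝ) : iv t ≠ ⊤ := ENNReal.ofReal_ne_top

lemma bub_inner {X V K : ℝ} (hX : 0 < X) (hV : 0 < V) (hK : 0 < K) :
    ∫⁻ Y in Ioi 0, rh (-lam X Y V) * iv (Y + K) = ENNReal.ofReal π * rh ((K + X + V)^2 - 4 * X * V) := by
  have sX := sq_sqrt hX.le
  have sV := sq_sqrt hV.le
  have pX : 0 < √X := sqrt_pos.mpr hX
  have pV : 0 < √V := sqrt_pos.mpr hV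
  have hlt : (√V - √X)^2 < (√V + √X)^2 := by nlinarith [mul_pos pX pV]
  have fac : ∀ Y, -lam X Y V = (Y - (√V - √X)^2) * ((√V + √X)^2 - Y) := by
    intro Y
    have := lam_fac hX.le hV.le Y
    have e : lam X Y V = lam X V Y := by unfold lam; ring
    rw [e, this]; ring
  rw [supp2 (s := Ioo ((√V - √X)^2) ((√V + √X)^2)) measurableSet_Ioo measurableSet_Ioi]
  · have := arcsine hlt K 1 (by positivity) (by positivity)
    rw [show (K + X + V)^2 - 4 * X * V = (K + 1 * (√V - √X)^2) * (K + 1 * (√V + √X)^2) by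
      nth_rw 1 2 [← sX]; nth_rw 1 2 [← sV]; ring, ← this]
    apply setLIntegral_congr_fun measurableSet_Ioo
    intro Y _
    simp only []
    rw [fac, one_mul, add_comm K]
  · intro Y hY
    exact lt_of_le_of_lt (sq_nonneg _) hY.1
  · intro Y _ hn
    rw [rh_of_nonpos, zero_mul]
    rw [fac]
    by_contra h
    apply hn
    constructor <;> by_contra h' <;> nlinarith

lemma bub_outer {V H K : ℝ} (hV : 0 < V) (hH : 0 < H) (hK : 0 < K) :
    ∫⁻ X in Ioi 0, iv (X + H) * rh ((K + X + V)^2 - 4 * X * V) = TT V H K := by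
  unfold TT
  rw [cov_half (g := fun s => s + V * s / (K + s)) (g' := fun s => 1 + V * K / (K + s)^2) ?_ (by simp) ?_ 1 0 (by norm_num)]
  · apply setLIntegral_congr_fun measurableSet_Ioi
    intro s hs
    have hs : 0 < s := hs
    simp only []
    rw [show (K + (s + V * s / (K + s)) + V)^2 - 4 * (s + V * s / (K + s)) * V = ((K + s) * (1 + V * K / (K + s)^2))^2 by
      field_simp; ring, rh_sq (by positivity), ← iv_mul _ (by positivity), ofReal_mul_iv (by positivity)]
    unfold iv
    congr 1
    have : s^2 + s * (V + H + K) + H * K = (s + V * s / (K + s) + H) * (K + s) := by field_simp; ring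
    rw [this]
    have h1 : 0 < 1 + V * K / (K + s)^2 := by positivity
    have h2 : 0 < s + V * s / (K + s) + H := by positivity
    generalize 1 + V * K / (K + s)^2 = D at *
    generalize s + V * s / (K + s) + H = E at *
    field_simp
  · intro x hx
    have : 0 ≤ V * x / (K + x) := by positivity
    linarith
  · intro x hx
    have h1 : HasDerivAt (fun z : ℝ => V * z) V x := by simpa using (hasDerivAt_id x).const_mul V
    have h2 : HasDerivAt (fun z : ℝ => K + z) 1 x := by simpa using (hasDerivAt_id x).const_add K
    refine ((hasDerivAt_id x).add (h1.div h2 (by positivity))).congr_deriv ?_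
    field_simp
    ring
  · intro x hx; positivity

lemma bubble {V H K : ℝ} (hV : 0 < V) (hH : 0 < H) (hK : 0 < K) :
    ∫⁻ X, ∫⁻ Y, rh (-lam X Y V) * (iv (X + H) * iv (Y + K)) ∂hl ∂hl = ENNReal.ofReal π * TT V H K := by
  rw [← bub_outer hV hH hK, ← lintegral_const_mul' _ _ (by finiteness)]
  apply setLIntegral_congr_fun measurableSet_Ioi
  intro X hX
  simp only []
  rw [show ∀ A B C : ENNReal, A * (B * C) = B * (A * C) by intros; ring, ← bub_inner hX hV hK,
    ← lintegral_const_mul' _ _ (iv_ne_top _)]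
  congr 1; ext Y; ring

/-- propagator average -/
noncomputable def qq (X : ℝ) : ENNReal := ∫⁻ U, wN U * iv (X + (1 + U)) ∂hl
/-- dual weight -/
noncomputable def pp (X : ℝ) : ENNReal := ∫⁻ U, wN U * (ENNReal.ofReal √(1 + U) * rh X * iv (X + (1 + U))) ∂hl

@[fun_prop] lemma measurable_qq : Measurable qq := by
  unfold qq
  apply meas_int (f := fun X U => wN U * iv (X + (1 + U)))
  fun_prop

@[fun_prop] lemma measurable_pp : Measurable pp := by
  unfold pp
  apply meas_int (f := fun X U => wN U * (ENNReal.ofReal √(1 + U) * rh X * iv (X + (1 + U))))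
  fun_prop

lemma pp_eq {V : ℝ} (hV : 0 < V) : pp V = ENNReal.ofReal π * wN V := by
  have := base (a := V + 1) (b := 1) (by linarith) one_pos
  unfold wN
  rw [show ENNReal.ofReal π * (rh V * rh (1 + V)) = rh V * (ENNReal.ofReal π * rh ((V + 1) * 1)) by rw [mul_one, add_comm V]; ring,
    ← this, ← lintegral_const_mul' _ _ (rh_ne_top _)]
  unfold pp
  apply setLIntegral_congr_fun measurableSet_Ioi
  intro U hU
  have hU : 0 < U := hU
  simp only []
  unfold wN
  have e : rh (1 + U) * ENNReal.ofReal √(1 + U) = 1 := by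
    rw [rh_sqrt, mul_comm, ofReal_mul_iv (by positivity), div_self (by positivity)]; simp
  rw [one_mul, ← add_assoc]
  calc _ = (rh (1 + U) * ENNReal.ofReal √(1 + U)) * (rh V * (rh U * iv (V + 1 + U))) := by ring
    _ = _ := by rw [e, one_mul]

/-- mixed triple integral -/
noncomputable def trI (f g h : ℝ → ENNReal) : ENNReal :=
  ∫⁻ V, ∫⁻ X, ∫⁻ Y, rh (-lam X Y V) * (f X * g Y * h V) ∂hl ∂hl ∂hl

lemma trI_qqp : trI qq qq pp = ENNReal.ofReal (π^2) * SL := by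
  rw [SL_2, ← lintegral_const_mul' _ _ (by finiteness)]
  unfold trI
  apply setLIntegral_congr_fun measurableSet_Ioi
  intro V hV
  have hV : 0 < V := hV
  simp only []
  have hp : pp V ≠ ⊤ := by
    rw [pp_eq hV]; exact ENNReal.mul_ne_top (by finiteness) (wN_ne_top V)
  have h1 : ∫⁻ X, ∫⁻ Y, rh (-lam X Y V) * (qq X * qq Y * pp V) ∂hl ∂hl =
     pp V * ∫⁻ X, ∫⁻ Y, rh (-lam X Y V) * (qq X * qq Y) ∂hl ∂hl := by
    simp_rw [← lintegral_const_mul' _ _ hp]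
    congr 1; ext X; congr 1; ext Y; ring
  have h2 : ∫⁻ X, ∫⁻ Y, rh (-lam X Y V) * (qq X * qq Y) ∂hl ∂hl =
      ∫⁻ X, ∫⁻ Y, ∫⁻ U, ∫⁻ W, wN U * (wN W * (rh (-lam X Y V) * (iv (X + (1 + U)) * iv (Y + (1 + W))))) ∂hl ∂hl ∂hl ∂hl := by
    congr 1; ext X; congr 1; ext Y
    unfold qq
    rw [← lintegral_mul_const _ (by fun_prop), ← lintegral_const_mul _ (by fun_prop)]
    congr 1; ext U
    rw [← lintegral_const_mul _ (by fun_prop), ← lintegral_const_mul _ (by fun_prop)]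
    congr 1; ext W
    ring
  rw [h1, h2]
  have h3 : ∫⁻ X, ∫⁻ Y, ∫⁻ U, ∫⁻ W, wN U * (wN W * (rh (-lam X Y V) * (iv (X + (1 + U)) * iv (Y + (1 + W))))) ∂hl ∂hl ∂hl ∂hl
     = ∫⁻ U, ∫⁻ W, ∫⁻ X, ∫⁻ Y, wN U * (wN W * (rh (-lam X Y V) * (iv (X + (1 + U)) * iv (Y + (1 + W))))) ∂hl ∂hl ∂hl ∂hl := by
    rw [push4 (by fun_prop), push4 (F := fun Y U W X => wN U * (wN W * (rh (-lam X Y V) * (iv (X + (1 + U)) * iv (Y + (1 + W))))))  (by fun_prop)]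
  rw [h3, pp_eq hV, show π^2 = π * π by ring, ENNReal.ofReal_mul pi_pos.le]
  rw [show ∀ A B C : ENNReal, A * B * C = A * (B * C) by intros; ring, mul_assoc]
  congr 1
  rw [mul_left_comm _ (wN V)]
  congr 1
  rw [← lintegral_const_mul' _ _ (by finiteness)]
  apply setLIntegral_congr_fun measurableSet_Ioi
  intro U hU
  have hU : 0 < U := hU
  simp only []
  rw [mul_left_comm, ← lintegral_const_mul' _ _ (by finiteness), ← lintegral_const_mul' _ _ (wN_ne_top U)]
  apply setLIntegral_congr_fun measurableSet_Ioi
  intro W hW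
  have hW : 0 < W := hW
  simp only []
  simp_rw [lintegral_const_mul' _ _ (wN_ne_top _)]
  rw [bubble hV (by positivity) (by positivity), mul_left_comm (wN W)]

lemma trI_swapXY (f g h : ℝ → ENNReal) (hf : Measurable f) (hg : Measurable g) (hh : Measurable h) :
    trI f g h = trI g f h := by
  unfold trI
  rw [swap_in (by fun_prop)]
  congr 1; ext V; congr 1; ext X; congr 1; ext Y
  rw [show lam Y X V = lam X Y V by unfold lam; ring]; ring

lemma trI_swapXV (f g h : ℝ → ENNReal) (hf : Measurable f) (hg : Measurable g) (hh : Measurable h) :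
    trI f g h = trI h g f := by
  unfold trI
  rw [swap_out (by fun_prop)]
  congr 1; ext V; congr 1; ext X; congr 1; ext Y
  rw [show lam V Y X = lam X Y V by unfold lam; ring]; ring

lemma trI_ppp : trI pp pp pp = ENNReal.ofReal (π^3) * Z1 := by
  unfold trI Z1
  rw [supp (s := Ioi 0) measurableSet_Ioi (fun V hV => by simp [wN_zero hV]), ← lintegral_const_mul' _ _ (by finiteness)]
  apply setLIntegral_congr_fun measurableSet_Ioi
  intro V hV
  simp only []
  rw [supp (s := Ioi 0) measurableSet_Ioi (fun V hV => by simp [wN_zero hV]), ← lintegral_const_mul' _ _ (by finiteness)]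
  apply setLIntegral_congr_fun measurableSet_Ioi
  intro X hX
  simp only []
  rw [supp (s := Ioi 0) measurableSet_Ioi (fun V hV => by simp [wN_zero hV]), ← lintegral_const_mul' _ _ (by finiteness)]
  apply setLIntegral_congr_fun measurableSet_Ioi
  intro Y hY
  simp only []
  rw [pp_eq hV, pp_eq hX, pp_eq hY, ENNReal.ofReal_pow pi_pos.le]
  ring
end SW

namespace SW

lemma pair_int {a b : ℝ} (ha : 0 < a) (hb : 0 < b) :
    ∫⁻ V in Ioi 0, rh V * (iv (V + a^2) * iv (V + b^2)) = ENNReal.ofReal (π / (a * b * (a + b))) := by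
  set L := ∫⁻ V in Ioi 0, rh V * (iv (V + a^2) * iv (V + b^2)) with hL
  have h1 : ∫⁻ V in Ioi 0, ENNReal.ofReal V * (rh V * (iv (V + a^2) * iv (V + b^2))) = ENNReal.ofReal (a * b) * L := by
    rw [cov_inv (s := Ioi 0) (t := Ioi 0) (g := fun z => a^2 * b^2 * z⁻¹) (g' := fun z => a^2 * b^2 * -(z^2)⁻¹) (k := fun y => a^2 * b^2 * y⁻¹) measurableSet_Ioi,
      hL, ← lintegral_const_mul' _ _ (by finiteness)]
    · apply setLIntegral_congr_fun measurableSet_Ioi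
      intro z hz
      have hz : 0 < z := hz
      simp only []
      have sz := sq_sqrt hz.le
      have pz : 0 < √z := sqrt_pos.mpr hz
      have e1 : √(a^2 * b^2 * z⁻¹) = a * b * (√z)⁻¹ := by
        rw [sqrt_mul (by positivity), ← mul_pow, sqrt_sq (by positivity), sqrt_inv]
      unfold rh iv
      rw [e1]
      rw [← ENNReal.ofReal_mul (by positivity), ← ENNReal.ofReal_mul (by positivity), ← ENNReal.ofReal_mul (by positivity), ← ENNReal.ofReal_mul (by positivity),
        ← ENNReal.ofReal_mul (by positivity), ← ENNReal.ofReal_mul (by positivity), ← ENNReal.ofReal_mul (by positivity)]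
      congr 1
      rw [mul_neg, abs_neg, abs_of_pos (by positivity)]
      generalize √z = w at *
      subst sz
      field_simp
      ring
    · intro x hx
      have hx : 0 < x := hx
      exact (hasDerivAt_inv hx.ne').const_mul _
    · intro x hx
      have hx : 0 < x := hx
      rw [mem_Ioi]
      positivity
    · intro x hx
      have hx : 0 < x := hx
      rw [mem_Ioi]
      positivity
    · intro x hx
      have hx : 0 < x := hx
      field_simp
    · intro x hx
      have hx : 0 < x := hx
      field_simp
  have h2 : (∫⁻ V in Ioi 0, ENNReal.ofReal V * (rh V * (iv (V + a^2) * iv (V + b^2)))) + ENNReal.ofReal (b^2) * L = ENNReal.ofReal (π / a) := by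
    rw [hL, ← lintegral_const_mul' _ _ (by finiteness), ← lintegral_add_left (by fun_prop)]
    have := base (a := a^2) (b := 1) (by positivity) one_pos
    rw [mul_one, rh_sq ha.le, ofReal_mul_iv pi_pos.le] at this
    rw [← this]
    apply setLIntegral_congr_fun measurableSet_Ioi
    intro V hV
    have hV : 0 < V := hV
    simp only []
    rw [← add_mul, ← ENNReal.ofReal_add (by positivity) (by positivity), one_mul, add_comm (a^2)]
    calc _ = rh V * (iv (V + a^2) * (ENNReal.ofReal (V + b^2) * iv (V + b^2))) := by ring
      _ = _ := by rw [ofReal_mul_iv (by positivity), div_self (by positivity)]; simp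
  rw [h1, ← add_mul, ← ENNReal.ofReal_add (by positivity) (by positivity)] at h2
  have h3 : L ≠ ⊤ := by
    intro h
    rw [h, ENNReal.mul_top (by simp; positivity)] at h2
    exact ENNReal.ofReal_ne_top h2.symm
  have h4 := congrArg ENNReal.toReal h2
  rw [ENNReal.toReal_mul, ENNReal.toReal_ofReal (by positivity), ENNReal.toReal_ofReal (by positivity)] at h4
  rw [← ENNReal.ofReal_toReal h3]
  congr 1
  have : L.toReal = (π / a) / (a * b + b^2) := by
    rw [eq_div_iff (by positivity), ← h4]; ring
  rw [this]
  field_simp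

lemma ray {a b c : ℝ} (ha : 0 < a) (hb : 0 < b) (hc : 0 < c) (hac : a ≠ c) :
    ENNReal.ofReal (a + b + c) * ∫⁻ V in Ioi 0, ENNReal.ofReal V * (rh V * (iv (V + a^2) * iv (V + b^2) * iv (V + c^2)))
     = ENNReal.ofReal (a * b * c) * ∫⁻ V in Ioi 0, rh V * (iv (V + a^2) * iv (V + b^2) * iv (V + c^2)) := by
  set I := ∫⁻ V in Ioi 0, rh V * (iv (V + a^2) * iv (V + b^2) * iv (V + c^2)) with hI
  set J := ∫⁻ V in Ioi 0, ENNReal.ofReal V * (rh V * (iv (V + a^2) * iv (V + b^2) * iv (V + c^2))) with hJ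
  have h1 : J + ENNReal.ofReal (c^2) * I = ENNReal.ofReal (π / (a * b * (a + b))) := by
    rw [hJ, hI, ← lintegral_const_mul' _ _ (by finiteness), ← lintegral_add_left (by fun_prop), ← pair_int ha hb]
    apply setLIntegral_congr_fun measurableSet_Ioi
    intro V hV
    have hV : 0 < V := hV
    simp only []
    rw [← add_mul, ← ENNReal.ofReal_add (by positivity) (by positivity)]
    calc _ = rh V * (iv (V + a^2) * iv (V + b^2) * (ENNReal.ofReal (V + c^2) * iv (V + c^2))) := by ring
      _ = _ := by rw [ofReal_mul_iv (by positivity), div_self (by positivity)]; simp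
  have h2 : J + ENNReal.ofReal (a^2) * I = ENNReal.ofReal (π / (b * c * (b + c))) := by
    rw [hJ, hI, ← lintegral_const_mul' _ _ (by finiteness), ← lintegral_add_left (by fun_prop), ← pair_int hb hc]
    apply setLIntegral_congr_fun measurableSet_Ioi
    intro V hV
    have hV : 0 < V := hV
    simp only []
    rw [← add_mul, ← ENNReal.ofReal_add (by positivity) (by positivity)]
    calc _ = rh V * (iv (V + b^2) * iv (V + c^2) * (ENNReal.ofReal (V + a^2) * iv (V + a^2))) := by ring
      _ = _ := by rw [ofReal_mul_iv (by positivity), div_self (by positivity)]; simp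
  have fJ : J ≠ ⊤ := by
    intro h; rw [h, top_add] at h1; exact ENNReal.ofReal_ne_top h1.symm
  have fI : I ≠ ⊤ := by
    intro h
    rw [h, ENNReal.mul_top (by simp; positivity), add_top] at h1
    exact ENNReal.ofReal_ne_top h1.symm
  have r1 := congrArg ENNReal.toReal h1
  have r2 := congrArg ENNReal.toReal h2
  rw [ENNReal.toReal_add fJ (by finiteness), ENNReal.toReal_mul, ENNReal.toReal_ofReal (by positivity), ENNReal.toReal_ofReal (by positivity)] at r1 r2
  rw [← ENNReal.ofReal_toReal fJ, ← ENNReal.ofReal_toReal fI, ← ENNReal.ofReal_mul (by positivity), ← ENNReal.ofReal_mul (by positivity)]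
  congr 1
  generalize I.toReal = i at *
  generalize J.toReal = j at *
  have hd : a - c ≠ 0 := sub_ne_zero.mpr hac
  have hi : i = π * (a + b + c) / (a * b * c * (a + b) * (b + c) * (c + a)) := by
    have : (a - c) * (a + c) * i = π / (b * c * (b + c)) - π / (a * b * (a + b)) := by linear_combination r2 - r1
    have hne : (a - c) * (a + c) ≠ 0 := mul_ne_zero hd (by positivity)
    apply mul_left_cancel₀ hne
    rw [this]
    field_simp
    ring
  have hj : j = π / (a * b * (a + b)) - c^2 * i := by linarith
  rw [hj, hi]
  field_simp
  ring

lemma trip {f g h : ℝ → ENNReal} (hf : Measurable f) (hg : Measurable g) (hh : Measurable h) :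
    (∫⁻ x, f x ∂hl) * (∫⁻ x, g x ∂hl) * (∫⁻ x, h x ∂hl) = ∫⁻ x, ∫⁻ y, ∫⁻ z, f x * g y * h z ∂hl ∂hl ∂hl := by
  simp_rw [lintegral_const_mul _ hh, lintegral_mul_const _ (hg.const_mul _), lintegral_const_mul _ hg]
  rw [lintegral_mul_const _ (by fun_prop), lintegral_mul_const _ (by fun_prop)]

lemma trip3 {f0 f1 g0 g1 h0 h1 : ℝ → ENNReal} (hf : Measurable f0) (hg : Measurable g0) (hh : Measurable h0)
     (hf1 : Measurable f1) (hg1 : Measurable g1) (hh1 : Measurable h1) :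
    (∫⁻ x, f0 x ∂hl) * (∫⁻ x, g0 x ∂hl) * (∫⁻ x, h1 x ∂hl) + ((∫⁻ x, f0 x ∂hl) * (∫⁻ x, g1 x ∂hl) * (∫⁻ x, h0 x ∂hl)
      + (∫⁻ x, f1 x ∂hl) * (∫⁻ x, g0 x ∂hl) * (∫⁻ x, h0 x ∂hl))
     = ∫⁻ x, ∫⁻ y, ∫⁻ z, (f0 x * g0 y * h1 z + (f0 x * g1 y * h0 z + f1 x * g0 y * h0 z)) ∂hl ∂hl ∂hl := by
  rw [trip hf hg hh1, trip hf hg1 hh, trip hf1 hg hh]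
  have add3 : ∀ F G : ℝ → ℝ → ℝ → ENNReal, (Measurable fun p : (ℝ × ℝ) × ℝ => F p.1.1 p.1.2 p.2) →
     (∫⁻ x, ∫⁻ y, ∫⁻ z, F x y z ∂hl ∂hl ∂hl) + (∫⁻ x, ∫⁻ y, ∫⁻ z, G x y z ∂hl ∂hl ∂hl)
      = ∫⁻ x, ∫⁻ y, ∫⁻ z, (F x y z + G x y z) ∂hl ∂hl ∂hl := by
    intro F G mF
    have m1 : Measurable fun p : ℝ × ℝ => ∫⁻ z, F p.1 p.2 z ∂hl :=
      meas_int (f := fun (p : ℝ × ℝ) z => F p.1 p.2 z) mF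
    have m2 : Measurable fun x : ℝ => ∫⁻ y, ∫⁻ z, F x y z ∂hl ∂hl :=
      meas_int (f := fun (x : ℝ) y => ∫⁻ z, F x y z ∂hl) m1
    rw [← lintegral_add_left m2]
    congr 1; ext x
    rw [← lintegral_add_left (show Measurable (fun y => ∫⁻ z, F x y z ∂hl) from m1.comp (by fun_prop : Measurable fun y : ℝ => (x, y)))]
    congr 1; ext y
    rw [← lintegral_add_left (show Measurable (fun z => F x y z) from mF.comp (by fun_prop : Measurable fun z : ℝ => ((x, y), z)))]
  rw [add3 (fun x y z => f0 x * g1 y * h0 z) (fun x y z => f1 x * g0 y * h0 z) (by fun_prop),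
    add3 (fun x y z => f0 x * g0 y * h1 z) (fun x y z => f0 x * g1 y * h0 z + f1 x * g0 y * h0 z) (by fun_prop)]

lemma ray_m {m n a b c w : ℝ} (hm : 0 < m) (hn : 0 < n) (ha : 0 < a) (hb : 0 < b) (hc : 0 < c) (hne : c ≠ a / m) :
    ∫⁻ V in Ioi 0, ENNReal.ofReal V * (
        iv (m * V + a) * iv (n * V + b) * (ENNReal.ofReal √c * rh V * iv (V + c))
        + (iv (m * V + a) * (ENNReal.ofReal √b * rh (n * V) * iv (n * V + b)) * iv (V + c)
        + (ENNReal.ofReal √a * rh (m * V) * iv (m * V + a)) * iv (n * V + b) * iv (V + c)))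
     = ∫⁻ V in Ioi 0, ENNReal.ofReal V * (
        (ENNReal.ofReal √a * rh (m * V) * iv (m * V + a)) * (ENNReal.ofReal √b * rh (n * V) * iv (n * V + b)) * (ENNReal.ofReal √c * rh V * iv (V + c))) := by
  have h := ray (a := √(a / m)) (b := √(b / n)) (c := √c) (by positivity) (by positivity) (by positivity) (by
    intro h; apply hne; rw [sqrt_inj (by positivity) (by positivity)] at h; exact h.symm)
  rw [sq_sqrt (by positivity), sq_sqrt (by positivity), sq_sqrt (by positivity)] at h
  have h2 := congrArg (fun t => iv m * iv n * t) h
  rw [← mul_assoc, ← mul_assoc, ← lintegral_const_mul' _ _ (by unfold iv; finiteness), ← lintegral_const_mul' _ _ (by unfold iv; finiteness)] at h2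
  have qa : ENNReal.ofReal √(a / m) = ENNReal.ofReal √a * rh m := by
    rw [rh_sqrt, ofReal_mul_iv (by positivity), sqrt_div ha.le]
  have qb : ENNReal.ofReal √(b / n) = ENNReal.ofReal √b * rh n := by
    rw [rh_sqrt, ofReal_mul_iv (by positivity), sqrt_div hb.le]
  have ea : ∀ V, iv (m * V + a) = iv m * iv (V + a / m) := by
    intro V; rw [← iv_mul _ hm.le]; congr 1; field_simp
  have eb : ∀ V, iv (n * V + b) = iv n * iv (V + b / n) := by
    intro V; rw [← iv_mul _ hn.le]; congr 1; field_simp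
  convert h2 using 1
  · apply setLIntegral_congr_fun measurableSet_Ioi
    intro V hV
    have hV : 0 < V := hV
    simp only []
    rw [ENNReal.ofReal_add (by positivity) (by positivity), ENNReal.ofReal_add (by positivity) (by positivity), qa, qb, ea, eb, rh_mul _ hm.le, rh_mul _ hn.le]
    ring
  · apply setLIntegral_congr_fun measurableSet_Ioi
    intro V hV
    have hV : 0 < V := hV
    simp only []
    rw [ENNReal.ofReal_mul (by positivity), ENNReal.ofReal_mul (by positivity), qa, qb, ea, eb, rh_mul _ hm.le, rh_mul _ hn.le]
    have e : ENNReal.ofReal V * (rh V * rh V) = 1 := by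
      rw [rh_mul_self hV.le, ofReal_mul_iv hV.le, div_self hV.ne']; simp
    generalize iv (V + a / m) = A
    generalize iv (V + b / n) = B
    generalize iv (V + c) = C
    calc _ = (ENNReal.ofReal V * (rh V * rh V)) * (iv m * iv n * (ENNReal.ofReal √a * rh m * (ENNReal.ofReal √b * rh n) * ENNReal.ofReal √c) * (rh V * (A * B * C))) := by ring
      _ = _ := by rw [e, one_mul]

lemma core {m n : ℝ} (hm : 0 < m) (hn : 0 < n) :
    ∫⁻ V in Ioi 0, ENNReal.ofReal V * (qq (m * V) * qq (n * V) * pp V + (qq (m * V) * pp (n * V) * qq V + pp (m * V) * qq (n * V) * qq V))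
    = ∫⁻ V in Ioi 0, ENNReal.ofReal V * (pp (m * V) * pp (n * V) * pp V) := by
  unfold qq pp
  have l : ∀ V : ℝ, _ := fun V => trip3 (f0 := fun U => wN U * iv (m * V + (1 + U))) (g0 := fun U => wN U * iv (n * V + (1 + U)))
    (h0 := fun U => wN U * iv (V + (1 + U)))
    (f1 := fun U => wN U * (ENNReal.ofReal √(1 + U) * rh (m * V) * iv (m * V + (1 + U))))
    (g1 := fun U => wN U * (ENNReal.ofReal √(1 + U) * rh (n * V) * iv (n * V + (1 + U))))
    (h1 := fun U => wN U * (ENNReal.ofReal √(1 + U) * rh V * iv (V + (1 + U))))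
    (by fun_prop) (by fun_prop) (by fun_prop) (by fun_prop) (by fun_prop) (by fun_prop)
  have r : ∀ V : ℝ, _ := fun V => trip
    (f := fun U => wN U * (ENNReal.ofReal √(1 + U) * rh (m * V) * iv (m * V + (1 + U))))
    (g := fun U => wN U * (ENNReal.ofReal √(1 + U) * rh (n * V) * iv (n * V + (1 + U))))
    (h := fun U => wN U * (ENNReal.ofReal √(1 + U) * rh V * iv (V + (1 + U))))
    (by fun_prop) (by fun_prop) (by fun_prop)
  simp only [l, r]
  have c : ∀ V : ℝ, ENNReal.ofReal V ≠ ⊤ := fun V => ENNReal.ofReal_ne_top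
  simp_rw [← lintegral_const_mul' _ _ (c _)]
  refine (push4 (by fun_prop)).trans (Eq.trans ?_ (push4 (by fun_prop)).symm)
  apply setLIntegral_congr_fun measurableSet_Ioi
  intro x hx
  have hx : 0 < x := hx
  apply setLIntegral_congr_fun measurableSet_Ioi
  intro y hy
  have hy : 0 < y := hy
  apply lintegral_congr_ae
  have hae : ∀ᵐ z ∂hl, z ≠ (1 + x) / m - 1 := by
    apply ae_restrict_of_ae
    rw [ae_iff]; simp
  filter_upwards [hae, ae_restrict_mem measurableSet_Ioi] with z hz hz0
  have hz0 : 0 < z := hz0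
  have := congrArg (fun t => wN x * wN y * wN z * t) (ray_m (w := 0) hm hn (a := 1 + x) (b := 1 + y) (c := 1 + z) (by positivity) (by positivity) (by positivity)
    (by intro h; apply hz; linarith))
  have hw := wN_ne_top
  have hw3 : wN x * wN y * wN z ≠ ⊤ := ENNReal.mul_ne_top (ENNReal.mul_ne_top (hw _) (hw _)) (hw _)
  rw [← lintegral_const_mul' _ _ hw3, ← lintegral_const_mul' _ _ hw3] at this
  convert this using 1
  · congr 1; ext V; ring
  · congr 1; ext V; ring

lemma rays {Q : ℝ → ℝ → ℝ → ENNReal} (hQ : Measurable fun p : ℝ × ℝ × ℝ => Q p.1 p.2.1 p.2.2) :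
    ∫⁻ V, ∫⁻ X, ∫⁻ Y, rh (-lam X Y V) * Q X Y V ∂hl ∂hl ∂hl
     = ∫⁻ m, ∫⁻ n, rh (-lam m n 1) * ∫⁻ V, ENNReal.ofReal V * Q (m * V) (n * V) V ∂hl ∂hl ∂hl := by
  have e : ∀ V ∈ Ioi (0:ℝ), ∫⁻ X, ∫⁻ Y, rh (-lam X Y V) * Q X Y V ∂hl ∂hl =
      ∫⁻ m, ∫⁻ n, rh (-lam m n 1) * (ENNReal.ofReal V * Q (m * V) (n * V) V) ∂hl ∂hl := by
    intro V hV
    have hV : 0 < V := hV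
    rw [scale hV, ← lintegral_const_mul' _ _ (by finiteness)]
    congr 1; ext m
    rw [scale hV, ← lintegral_const_mul' _ _ (by finiteness), ← lintegral_const_mul' _ _ (by finiteness)]
    congr 1; ext n
    rw [show -lam (V * m) (V * n) V = V^2 * -lam m n 1 by unfold lam; ring, rh_mul _ (by positivity), rh_sq hV.le, mul_comm V m, mul_comm V n]
    have e : ENNReal.ofReal V * iv V = 1 := by
      rw [ofReal_mul_iv hV.le, div_self hV.ne']; simp
    calc _ = (ENNReal.ofReal V * iv V) * (rh (-lam m n 1) * (ENNReal.ofReal V * Q (m * V) (n * V) V)) := by ring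
      _ = _ := by rw [e, one_mul]
  rw [setLIntegral_congr_fun measurableSet_Ioi e, push3]
  · congr 1; ext m; congr 1; ext n
    rw [lintegral_const_mul' _ _ (rh_ne_top _)]
  · have := hQ.comp (by fun_prop : Measurable fun p : ℝ × ℝ × ℝ => (p.2.1 * p.1, p.2.2 * p.1, p.1))
    have h2 : Measurable fun p : ℝ × ℝ × ℝ => Q (p.2.1 * p.1) (p.2.2 * p.1) p.1 := this
    fun_prop

end SW

namespace SW

lemma add2 {F G : ℝ → ℝ → ENNReal} (mF : Measurable fun p : ℝ × ℝ => F p.1 p.2) :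
    (∫⁻ x, ∫⁻ y, F x y ∂hl ∂hl) + (∫⁻ x, ∫⁻ y, G x y ∂hl ∂hl) = ∫⁻ x, ∫⁻ y, (F x y + G x y) ∂hl ∂hl := by
  have m2 : Measurable fun x : ℝ => ∫⁻ y, F x y ∂hl :=
    meas_int (f := fun (x : ℝ) y => F x y) mF
  rw [← lintegral_add_left m2]
  congr 1; ext x
  rw [← lintegral_add_left (show Measurable (fun y => F x y) from mF.comp (by fun_prop : Measurable fun y : ℝ => (x, y)))]

lemma mray {Q : ℝ → ℝ → ℝ → ENNReal} (hQ : Measurable fun p : ℝ × ℝ × ℝ => Q p.1 p.2.1 p.2.2) :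
      Measurable fun p : ℝ × ℝ => rh (-lam p.1 p.2 1) * ∫⁻ V, ENNReal.ofReal V * Q (p.1 * V) (p.2 * V) V ∂hl := by
  have h0 : Measurable fun p : ℝ × ℝ => rh (-lam p.1 p.2 1) := by fun_prop
  have h1 : Measurable fun p : ℝ × ℝ => ∫⁻ V, ENNReal.ofReal V * Q (p.1 * V) (p.2 * V) V ∂hl := by
    apply meas_int (f := fun (p : ℝ × ℝ) V => ENNReal.ofReal V * Q (p.1 * V) (p.2 * V) V)
    have h2 : Measurable fun p : (ℝ × ℝ) × ℝ => Q (p.1.1 * p.2) (p.1.2 * p.2) p.2 :=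
      hQ.comp (by fun_prop : Measurable fun p : (ℝ × ℝ) × ℝ => (p.1.1 * p.2, p.1.2 * p.2, p.2))
    fun_prop
  exact h0.mul h1

lemma rays3 {Q1 Q2 Q3 Q4 : ℝ → ℝ → ℝ → ENNReal} (h1 : Measurable fun p : ℝ × ℝ × ℝ => Q1 p.1 p.2.1 p.2.2)
    (h2 : Measurable fun p : ℝ × ℝ × ℝ => Q2 p.1 p.2.1 p.2.2) (h3 : Measurable fun p : ℝ × ℝ × ℝ => Q3 p.1 p.2.1 p.2.2)
    (h4 : Measurable fun p : ℝ × ℝ × ℝ => Q4 p.1 p.2.1 p.2.2)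
    (hc : ∀ m n : ℝ, 0 < m → 0 < n → ∫⁻ V in Ioi 0, ENNReal.ofReal V * (Q1 (m * V) (n * V) V + (Q2 (m * V) (n * V) V + Q3 (m * V) (n * V) V))
      = ∫⁻ V in Ioi 0, ENNReal.ofReal V * Q4 (m * V) (n * V) V) :
    (∫⁻ V, ∫⁻ X, ∫⁻ Y, rh (-lam X Y V) * Q1 X Y V ∂hl ∂hl ∂hl) + ((∫⁻ V, ∫⁻ X, ∫⁻ Y, rh (-lam X Y V) * Q2 X Y V ∂hl ∂hl ∂hl)
     + (∫⁻ V, ∫⁻ X, ∫⁻ Y, rh (-lam X Y V) * Q3 X Y V ∂hl ∂hl ∂hl)) = ∫⁻ V, ∫⁻ X, ∫⁻ Y, rh (-lam X Y V) * Q4 X Y V ∂hl ∂hl ∂hl := by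
  rw [rays h1, rays h2, rays h3, rays h4, add2 (mray h2), add2 (mray h1)]
  apply setLIntegral_congr_fun measurableSet_Ioi
  intro m hm
  apply setLIntegral_congr_fun measurableSet_Ioi
  intro n hn
  simp only []
  have e : ∀ Q : ℝ → ℝ → ℝ → ENNReal, (Measurable fun p : ℝ × ℝ × ℝ => Q p.1 p.2.1 p.2.2) →
      Measurable fun V => ENNReal.ofReal V * Q (m * V) (n * V) V := by
    intro Q hQ
    have : Measurable fun V : ℝ => Q (m * V) (n * V) V := hQ.comp (by fun_prop : Measurable fun V : ℝ => (m * V, n * V, V))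
    fun_prop
  rw [← hc m n hm hn, ← mul_add, ← mul_add, ← lintegral_add_left (e Q2 h2), ← lintegral_add_left (e Q1 h1)]
  simp_rw [mul_add]

lemma SL_Z1 : 3 * (ENNReal.ofReal (π^2) * SL) = ENNReal.ofReal (π^3) * Z1 := by
  rw [← trI_ppp, ← trI_qqp]
  have h1 : trI qq pp qq = trI qq qq pp := by
    rw [trI_swapXY _ _ _ (by fun_prop) (by fun_prop) (by fun_prop), trI_swapXV _ _ _ (by fun_prop) (by fun_prop) (by fun_prop)]
  have h2 : trI pp qq qq = trI qq qq pp := trI_swapXV _ _ _ (by fun_prop) (by fun_prop) (by fun_prop)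
  have h3 : 3 * trI qq qq pp = trI qq qq pp + (trI qq pp qq + trI pp qq qq) := by rw [h1, h2]; ring
  rw [h3]
  unfold trI
  exact rays3 (Q1 := fun X Y V => qq X * qq Y * pp V) (Q2 := fun X Y V => qq X * pp Y * qq V)
    (Q3 := fun X Y V => pp X * qq Y * qq V) (Q4 := fun X Y V => pp X * pp Y * pp V)
    (by fun_prop) (by fun_prop) (by fun_prop) (by fun_prop) (fun m n hm hn => core hm hn)

lemma SL_RL : SL ≠ ⊤ ∧ SL.toReal = (4/3) * RL.toReal := by
  have h1 := SL_Z1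
  rw [Z1_W1] at h1
  have h2 := RL_eq
  have hW : W1 ≠ ⊤ := by
    intro h
    rw [h, ENNReal.mul_top (by simp [pi_pos])] at h2
    exact ENNReal.mul_ne_top (by finiteness) RL_fin h2
  have hS : SL ≠ ⊤ := by
    intro h
    rw [h, ENNReal.mul_top (by simp), ENNReal.mul_top (by simp)] at h1
    exact ENNReal.mul_ne_top (by finiteness) (ENNReal.mul_ne_top (by finiteness) hW) h1.symm
  refine ⟨hS, ?_⟩
  have r1 := congrArg ENNReal.toReal h1
  have r2 := congrArg ENNReal.toReal h2
  simp only [ENNReal.toReal_mul, ENNReal.toReal_ofNat] at r1 r2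
  rw [ENNReal.toReal_ofReal (by positivity), ENNReal.toReal_ofReal (by positivity)] at r1
  rw [ENNReal.toReal_ofReal (by positivity)] at r2
  have hp : π^2 ≠ 0 := by positivity
  apply mul_left_cancel₀ hp
  linear_combination r1 / 3 - π^2 / 12 * r2

end SW

theorem sunrise_eq_watson :
    (∫ x1 in Ioi (0:ℝ), ∫ x2 in Ioi (0:ℝ), ∫ x3 in Ioi (0:ℝ), ∫ x4 in Ioi (0:ℝ),
      1 / (x1 * x2 * x3 * x4 *
        ((1 + (x1 + x2 + x3 + x4)) * (1 + (1/x1 + 1/x2 + 1/x3 + 1/x4)) - 1)))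
    = (4/3) * ∫ p1 in (0:ℝ)..π, ∫ p2 in (0:ℝ)..π, ∫ p3 in (0:ℝ)..π, ∫ p4 in (0:ℝ)..π,
        1 / (4 - cos p1 - cos p2 - cos p3 - cos p4) := by
  rw [SW.watson_conv, ← SW.SL_RL.2]
  refine SW.conv4 (f := fun x1 x2 x3 x4 => 1 / (x1 * x2 * x3 * x4 *
        ((1 + (x1 + x2 + x3 + x4)) * (1 + (1/x1 + 1/x2 + 1/x3 + 1/x4)) - 1))) measurableSet_Ioi (by fun_prop) ?_ SW.SL_RL.1
  intro x hx y hy z hz w hw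
  rw [mem_Ioi] at hx hy hz hw
  have : 0 ≤ (1 + (x + y + z + w)) * (1 + (1/x + 1/y + 1/z + 1/w)) - 1 := by
    have : (1 + (x + y + z + w)) * (1 + (1/x + 1/y + 1/z + 1/w)) - 1 = (x + y + z + w) + (1 + (x + y + z + w)) * (1/x + 1/y + 1/z + 1/w) := by ring
    rw [this]; positivity
  positivity
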